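/- arXiv:2504.00529 — 3 statements merged into one kernel-verified Lean document; each statement's English description precedes it below -/
import Mathlib

section
/- Let Γ be a finite extensive-form game with perfect recall. If (β*, μ*) is a semi-sequential equilibrium, then β* is a Nash equilibrium in behavioral strategies. -/
open scoped Classical

noncomputable section

/-- A finite extensive-form game.  Actions are labelled by natural numbers drawn from the
finite pool `actFinset`; a history is the list of actions taken so far; players are `Fin n`
and `P h = none` means that the chance player moves after `h`.  The information sets of
player `i` are `Info i j` for `j < m i`, and `infoIdx h` is the index of the information
set containing a nonterminal history `h` at which some player moves.  Payoffs `u i h` are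
relevant on terminal histories. -/
structure EFG where
  n : ℕ
  actFinset : Finset ℕ
  H : Finset (List ℕ)
  P : List ℕ → Option (Fin n)
  fc : List ℕ → ℕ → ℝ
  m : Fin n → ℕ
  Info : Fin n → ℕ → Finset (List ℕ)
  infoIdx : List ℕ → ℕ
  u : Fin n → List ℕ → ℝ
  empty_mem : ([] : List ℕ) ∈ H
  prefixClosed : ∀ h ∈ H, ∀ h' : List ℕ, h' <+: h → h' ∈ H
  act_mem : ∀ (h : List ℕ) (a : ℕ), h ++ [a] ∈ H → a ∈ actFinset
  fc_nonneg : ∀ h a, 0 ≤ fc h a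
  fc_sum : ∀ h ∈ H, P h = none → (∃ a, h ++ [a] ∈ H) →
    ∑ a ∈ actFinset.filter (fun a => h ++ [a] ∈ H), fc h a = 1
  info_spec : ∀ (i : Fin n) (j : ℕ) (h : List ℕ), j < m i →
    (h ∈ Info i j ↔ h ∈ H ∧ P h = some i ∧ (∃ a, h ++ [a] ∈ H) ∧ infoIdx h = j)
  infoIdx_lt : ∀ (i : Fin n), ∀ h ∈ H, P h = some i → (∃ a, h ++ [a] ∈ H) → infoIdx h < m i
  info_nonempty : ∀ (i : Fin n) (j : ℕ), j < m i → (Info i j).Nonempty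
  info_actions : ∀ (i : Fin n) (j : ℕ), j < m i → ∀ h ∈ Info i j, ∀ h' ∈ Info i j,
    ∀ a : ℕ, (h ++ [a] ∈ H ↔ h' ++ [a] ∈ H)
  act_unique : ∀ (h h' : List ℕ) (a : ℕ), h ∈ H → h' ∈ H → h ++ [a] ∈ H → h' ++ [a] ∈ H →
    P h = P h' ∧ infoIdx h = infoIdx h'

namespace EFG

/-- Behavioral strategy profiles (player, information-set index, action ↦ probability). -/
abbrev Profile (G : EFG) : Type := Fin G.n → ℕ → ℕ → ℝ

/-- Belief systems (player, information-set index, history ↦ probability). -/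
abbrev Belief (G : EFG) : Type := Fin G.n → ℕ → List ℕ → ℝ

variable (G : EFG)

/-- The set `Z` of terminal histories. -/
def Zset : Finset (List ℕ) := G.H.filter fun h => ∀ a : ℕ, h ++ [a] ∉ G.H

/-- The set `A(h)` of actions available after a history. -/
def A (h : List ℕ) : Finset ℕ := G.actFinset.filter fun a => h ++ [a] ∈ G.H

/-- The common action set `A(I_i^j)` of an information set. -/
def infoA (i : Fin G.n) (j : ℕ) : Finset ℕ := (G.Info i j).sup fun h => G.A h

/-- A behavioral strategy of player `i`: a probability distribution on `A(I_i^j)` for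
each information set `I_i^j`. -/
def IsBehStrategy (i : Fin G.n) (b : ℕ → ℕ → ℝ) : Prop :=
  ∀ j < G.m i, (∀ a ∈ G.infoA i j, 0 ≤ b j a) ∧ ∑ a ∈ G.infoA i j, b j a = 1

/-- A behavioral strategy profile. -/
def IsBehProfile (β : G.Profile) : Prop := ∀ i : Fin G.n, G.IsBehStrategy i (β i)

/-- The probability of action `a` at history `h`: the chance distribution if the chance
player moves, and the mover's behavioral strategy otherwise. -/
def moveProb (β : G.Profile) (h : List ℕ) (a : ℕ) : ℝ :=
  (G.P h).elim (G.fc h a) fun i => β i (G.infoIdx h) a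

/-- Player `i`'s record `X_i` of the information sets he encounters along a history and the
actions he takes at them, accumulated starting from the prefix `pre`. -/
def recordFrom (i : Fin G.n) : List ℕ → List ℕ → List (ℕ × ℕ)
  | _, [] => []
  | pre, b :: rest =>
    (if G.P pre = some i then [(G.infoIdx pre, b)] else []) ++ recordFrom i (pre ++ [b]) rest

/-- Perfect recall. -/
def PerfectRecall : Prop :=
  ∀ (i : Fin G.n) (j : ℕ), j < G.m i →
    ∀ h ∈ G.Info i j, ∀ h' ∈ G.Info i j, G.recordFrom i [] h = G.recordFrom i [] h'

/-- Product of the move probabilities along `rest`, continuing from the prefix `pre`. -/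
def prodAlong (β : G.Profile) : List ℕ → List ℕ → ℝ
  | _, [] => 1
  | pre, b :: rest => G.moveProb β pre b * prodAlong β (pre ++ [b]) rest

/-- `ω(h|β)`: the probability that the moves along `h` are played under `β`. -/
def omega (β : G.Profile) (h : List ℕ) : ℝ := G.prodAlong β [] h

/-- `ω(I_i^j|β)`. -/
def omegaInfo (i : Fin G.n) (j : ℕ) (β : G.Profile) : ℝ := ∑ h ∈ G.Info i j, G.omega β h

/-- Product of the move probabilities along `rest` from `pre`, disregarding player `i`'s
own moves. -/
def prodAlongNot (i : Fin G.n) (β : G.Profile) : List ℕ → List ℕ → ℝ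
  | _, [] => 1
  | pre, b :: rest =>
    (if G.P pre = some i then 1 else G.moveProb β pre b) * prodAlongNot i β (pre ++ [b]) rest

/-- `S^i(h|β)`: probability of the moves along `h`, disregarding player `i`'s own moves. -/
def Sh (i : Fin G.n) (β : G.Profile) (h : List ℕ) : ℝ := G.prodAlongNot i β [] h

/-- `S^i(I_i^j|β)`. -/
def SInfo (i : Fin G.n) (j : ℕ) (β : G.Profile) : ℝ := ∑ h ∈ G.Info i j, G.Sh i β h

/-- Product of the move probabilities along `rest` from `pre`, with the factor at prefixes
lying in `I_i^j` omitted. -/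
def prodAlongSkip (i : Fin G.n) (j : ℕ) (β : G.Profile) : List ℕ → List ℕ → ℝ
  | _, [] => 1
  | pre, b :: rest =>
    (if pre ∈ G.Info i j then 1 else G.moveProb β pre b) * prodAlongSkip i j β (pre ++ [b]) rest

/-- `q ∈ M(a, I_i^j)`: `I_i^q` is a first information set of player `i` after action `a`
(every history in `I_i^q` contains `a`, with no later action of `a` lying in any action set
of player `i`). -/
def FirstAfter (i : Fin G.n) (a : ℕ) (q : ℕ) : Prop :=
  q < G.m i ∧ ∀ h ∈ G.Info i q, ∃ l₁ l₂ : List ℕ,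
    h = l₁ ++ a :: l₂ ∧ ∀ b ∈ l₂, ∀ p < G.m i, b ∉ G.infoA i p

/-- `q ∈ M(I_i^j) = ∪_{a ∈ A(I_i^j)} M(a, I_i^j)`. -/
def MInfo (i : Fin G.n) (j : ℕ) (q : ℕ) : Prop := ∃ a ∈ G.infoA i j, G.FirstAfter i a q

/-- `q ∈ Λ(a, I_i^j)`: every history in `I_i^q` contains the action `a`. -/
def LambdaSet (i : Fin G.n) (a : ℕ) (q : ℕ) : Prop :=
  q < G.m i ∧ ∀ h ∈ G.Info i q, ∃ l₁ l₂ : List ℕ, h = l₁ ++ a :: l₂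

/-- `ϱ^i_{I_i^j}(β, β̃)`: replace player `i`'s component of `β` by that of `β̃` at every
information set `I_i^q` such that some history in `I_i^q` contains an action of `A(I_i^j)`. -/
def rho (i : Fin G.n) (j : ℕ) (β βt : G.Profile) : G.Profile := fun p q =>
  if p = i ∧ ∃ h ∈ G.Info i q, ∃ b ∈ h, b ∈ G.infoA i j then βt i q else β p q

/-- A belief system: a probability distribution on each information set. -/
def IsBelief (μ : G.Belief) : Prop :=
  ∀ (i : Fin G.n) (j : ℕ), j < G.m i →
    (∀ h ∈ G.Info i j, 0 ≤ μ i j h) ∧ ∑ h ∈ G.Info i j, μ i j h = 1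

/-- A self-independent belief system for `β`:
`S^i(I_i^j|β) · μ^i_{I_i^j}(h) = S^i(h|β)`. -/
def SelfIndep (β : G.Profile) (μ : G.Belief) : Prop :=
  ∀ (i : Fin G.n) (j : ℕ), j < G.m i → ∀ h ∈ G.Info i j,
    G.SInfo i j β * μ i j h = G.Sh i β h

/-- Auxiliary for `ν`: scan `rest` from `pre` for the subhistory lying in `I_i^j`, then
weight by the belief and multiply the move probabilities of the remaining moves (the move
taken at the subhistory itself being skipped). -/
def nuAux (i : Fin G.n) (j : ℕ) (β : G.Profile) (w : List ℕ → ℝ) : List ℕ → List ℕ → ℝ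
  | _, [] => 0
  | pre, b :: rest =>
    if pre ∈ G.Info i j then w pre * G.prodAlong β (pre ++ [b]) rest
    else nuAux i j β w (pre ++ [b]) rest

/-- `ν^i_{I_i^j}(h | a, β^{-I_i^j}, μ)` (it does not involve the component of `β` at
`I_i^j`). -/
def nu (i : Fin G.n) (j : ℕ) (β : G.Profile) (μ : G.Belief) (h : List ℕ) : ℝ :=
  G.nuAux i j β (μ i j) [] h

/-- `u^i((a, β^{-I_i^j}) ∧ I_i^j)`. -/
def uWedgeAct (i : Fin G.n) (j : ℕ) (a : ℕ) (β : G.Profile) : ℝ :=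
  ∑ h ∈ G.Zset.filter (fun h => a ∈ h), G.u i h * G.prodAlongSkip i j β [] h

/-- `u^i(β ∧ I_i^j)`. -/
def uWedge (i : Fin G.n) (j : ℕ) (β : G.Profile) : ℝ :=
  ∑ h ∈ G.Zset.filter (fun h => ∃ b ∈ h, b ∈ G.infoA i j), G.u i h * G.omega β h

/-- The conditional expected payoff `u^i(a, β^{-I_i^j}, μ | I_i^j)`. -/
def uCond (i : Fin G.n) (j : ℕ) (a : ℕ) (β : G.Profile) (μ : G.Belief) : ℝ :=
  ∑ h ∈ G.Zset.filter (fun h => a ∈ h), G.u i h * G.nu i j β μ h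

/-- The expected payoff `u^i(β)`. -/
def uExp (i : Fin G.n) (β : G.Profile) : ℝ := ∑ h ∈ G.Zset, G.u i h * G.omega β h

/-- The profile obtained from `β` by replacing all of player `i`'s components by `b`. -/
def replace (β : G.Profile) (i : Fin G.n) (b : ℕ → ℕ → ℝ) : G.Profile :=
  fun p => if p = i then b else β p

/-- `β` is a Nash equilibrium in behavioral strategies. -/
def IsNash (β : G.Profile) : Prop :=
  G.IsBehProfile β ∧ ∀ (i : Fin G.n) (b : ℕ → ℕ → ℝ), G.IsBehStrategy i b →
    G.uExp i (G.replace β i b) ≤ G.uExp i β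

/-- `(β, β̃, μ)` satisfies the Nash characterization (Definition 2 of the paper). -/
def NashChar (β βt : G.Profile) (μ : G.Belief) : Prop :=
  (∀ (i : Fin G.n) (j : ℕ), j < G.m i → ∀ a' ∈ G.infoA i j, ∀ a'' ∈ G.infoA i j,
    G.uWedgeAct i j a' (G.rho i j β βt) < G.uWedgeAct i j a'' (G.rho i j β βt) →
    β i j a' = 0) ∧
  (∀ (i : Fin G.n) (j : ℕ), j < G.m i → ∀ a' ∈ G.infoA i j, ∀ a'' ∈ G.infoA i j,
    G.uCond i j a' (G.rho i j β βt) μ < G.uCond i j a'' (G.rho i j β βt) μ →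
    βt i j a' = 0) ∧
  G.IsBelief μ ∧ G.SelfIndep β μ

/-- `r` is the root of a subgame: every information set lies entirely inside or entirely
outside the set of histories extending `r`. -/
def IsSubgameRoot (r : List ℕ) : Prop :=
  r ∈ G.H ∧ ∀ (i : Fin G.n) (j : ℕ), j < G.m i →
    (∀ h ∈ G.Info i j, r <+: h) ∨ ∀ h ∈ G.Info i j, ¬ r <+: h

/-- The depth `g` of the smallest subgame containing `A(I_i^j)` (the length of the longest
subgame root preceding every history of `I_i^j`). -/
def sgDepthInfo (i : Fin G.n) (j : ℕ) : ℕ :=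
  (G.H.filter fun r => G.IsSubgameRoot r ∧ ∀ h ∈ G.Info i j, r <+: h).sup List.length

/-- The depth `q(h)` of the smallest subgame containing the last action of `h`. -/
def sgDepthHist (h : List ℕ) : ℕ :=
  (G.H.filter fun r => G.IsSubgameRoot r ∧ r <+: h.dropLast).sup List.length

/-- `C^i_{I_i^j}(h|β)`: product of move probabilities along `h` within the smallest subgame
containing `A(I_i^j)`. -/
def Ch (i : Fin G.n) (j : ℕ) (β : G.Profile) (h : List ℕ) : ℝ :=
  G.prodAlong β (h.take (G.sgDepthInfo i j)) (h.drop (G.sgDepthInfo i j))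

/-- `C^i_{I_i^j}(I_i^j|β)`. -/
def CInfo (i : Fin G.n) (j : ℕ) (β : G.Profile) : ℝ := ∑ h ∈ G.Info i j, G.Ch i j β h

/-- `u^i((a, β^{-I_i^j}) ⋄ I_i^j)`. -/
def uDiamondAct (i : Fin G.n) (j : ℕ) (a : ℕ) (β : G.Profile) : ℝ :=
  ∑ h ∈ G.Zset.filter (fun h => a ∈ h), G.u i h *
    G.prodAlongSkip i j β (h.take (G.sgDepthInfo i j)) (h.drop (G.sgDepthInfo i j))

/-- `Y^i(h|β)`: like `S^i(h|β)` but within the smallest subgame containing the last action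
of `h`. -/
def Yh (i : Fin G.n) (β : G.Profile) (h : List ℕ) : ℝ :=
  G.prodAlongNot i β (h.take (G.sgDepthHist h)) (h.drop (G.sgDepthHist h))

/-- `Y^i(I_i^j|β)`. -/
def YInfo (i : Fin G.n) (j : ℕ) (β : G.Profile) : ℝ := ∑ h ∈ G.Info i j, G.Yh i β h

/-- The belief condition `Y^i(I_i^j|β) · μ^i_{I_i^j}(h) = Y^i(h|β)`. -/
def YConsistent (β : G.Profile) (μ : G.Belief) : Prop :=
  ∀ (i : Fin G.n) (j : ℕ), j < G.m i → ∀ h ∈ G.Info i j,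
    G.YInfo i j β * μ i j h = G.Yh i β h

/-- The expected payoff of player `i` in the subgame rooted at `r` (payoffs of terminal
histories extending `r`, weighted by the move probabilities within the subgame). -/
def uExpFrom (i : Fin G.n) (β : G.Profile) (r : List ℕ) : ℝ :=
  ∑ h ∈ G.Zset.filter (fun h => r <+: h), G.u i h * G.prodAlong β r (h.drop r.length)

/-- `β` is a subgame perfect equilibrium in behavioral strategies: its restriction to every
subgame is a Nash equilibrium in behavioral strategies of that subgame. -/
def IsSubgamePerfect (β : G.Profile) : Prop :=
  G.IsBehProfile β ∧ ∀ r : List ℕ, G.IsSubgameRoot r →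
    ∀ (i : Fin G.n) (b : ℕ → ℕ → ℝ), G.IsBehStrategy i b →
      G.uExpFrom i (G.replace β i b) r ≤ G.uExpFrom i β r

/-- `(β, β̃, μ)` satisfies the subgame perfect characterization (Definition 6 of the
paper). -/
def SubgameChar (β βt : G.Profile) (μ : G.Belief) : Prop :=
  (∀ (i : Fin G.n) (j : ℕ), j < G.m i → ∀ a' ∈ G.infoA i j, ∀ a'' ∈ G.infoA i j,
    G.uDiamondAct i j a' (G.rho i j β βt) < G.uDiamondAct i j a'' (G.rho i j β βt) →
    β i j a' = 0) ∧
  (∀ (i : Fin G.n) (j : ℕ), j < G.m i → ∀ a' ∈ G.infoA i j, ∀ a'' ∈ G.infoA i j,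
    G.uCond i j a' (G.rho i j β βt) μ < G.uCond i j a'' (G.rho i j β βt) μ →
    βt i j a' = 0) ∧
  G.IsBelief μ ∧ G.YConsistent β μ

/-- `(β, μ)` is a semi-sequential equilibrium. -/
def SemiSeqEq (β : G.Profile) (μ : G.Belief) : Prop :=
  G.IsBehProfile β ∧ G.IsBelief μ ∧ G.SelfIndep β μ ∧
  ∀ (i : Fin G.n) (j : ℕ), j < G.m i → ∀ a' ∈ G.infoA i j, ∀ a'' ∈ G.infoA i j,
    G.uCond i j a' β μ < G.uCond i j a'' β μ → β i j a' = 0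

/-- `(β, μ)` is a subgame perfect semi-sequential equilibrium. -/
def SubgameSemiSeqEq (β : G.Profile) (μ : G.Belief) : Prop :=
  G.IsBehProfile β ∧ G.IsBelief μ ∧ G.YConsistent β μ ∧
  ∀ (i : Fin G.n) (j : ℕ), j < G.m i → ∀ a' ∈ G.infoA i j, ∀ a'' ∈ G.infoA i j,
    G.uCond i j a' β μ < G.uCond i j a'' β μ → β i j a' = 0

/-- `d(I_i^j)`: the number of information sets of player `i` containing a prefix of some
history of `I_i^j` (counting `I_i^j` itself). -/
def dInfo (i : Fin G.n) (j : ℕ) : ℕ :=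
  ((Finset.range (G.m i)).filter
    (fun q => ∃ h ∈ G.Info i j, ∃ p : List ℕ, p <+: h ∧ p ∈ G.Info i q)).card

end EFG

namespace EFG

/-- Continuation value after taking `a` at `h`. -/
def contVal (G : EFG) (i : Fin G.n) (β : G.Profile) (h : List ℕ) (a : ℕ) : ℝ :=
  ∑ z ∈ G.Zset, if h ++ [a] <+: z then
    G.u i z * G.prodAlong β (h ++ [a]) (z.drop (h.length + 1)) else 0

theorem A_eq_infoA (G : EFG) {i : Fin G.n} {j : ℕ} (hj : j < G.m i) {h : List ℕ}
    (hh : h ∈ G.Info i j) : G.A h = G.infoA i j := by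
  ext a
  simp only [infoA, Finset.mem_sup, A, Finset.mem_filter]
  constructor
  · intro ha
    exact ⟨h, hh, ha⟩
  · rintro ⟨h', hh', ha⟩
    exact ⟨ha.1, (G.info_actions i j hj h hh h' hh' a).2 ha.2⟩

theorem prodAlong_append (G : EFG) (β : G.Profile) (pre l₁ l₂ : List ℕ) :
    G.prodAlong β pre (l₁ ++ l₂) = G.prodAlong β pre l₁ * G.prodAlong β (pre ++ l₁) l₂ := by
  induction l₁ generalizing pre with
  | nil => simp [prodAlong]
  | cons b l ih => simp [prodAlong, ih, mul_assoc]

theorem recordFrom_append (G : EFG) (i : Fin G.n) (pre l₁ l₂ : List ℕ) :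
    G.recordFrom i pre (l₁ ++ l₂) = G.recordFrom i pre l₁ ++ G.recordFrom i (pre ++ l₁) l₂ := by
  induction l₁ generalizing pre with
  | nil => simp [recordFrom]
  | cons b l ih => simp [recordFrom, ih]

theorem info_prefix_eq (G : EFG) (hPR : G.PerfectRecall) {i : Fin G.n} {j : ℕ} (hj : j < G.m i)
    {p q : List ℕ} (hp : p ∈ G.Info i j) (hq : q ∈ G.Info i j) (hpq : p <+: q) : p = q := by
  obtain ⟨r, rfl⟩ := hpq
  cases r with
  | nil => simp
  | cons c r =>
    have h1 := hPR i j hj _ hp _ hq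
    rw [recordFrom_append] at h1
    have h2 := congrArg List.length h1
    have h3 := ((G.info_spec i j p hj).1 hp).2.1
    simp [recordFrom, h3] at h2

theorem nuAux_eq (G : EFG) (i : Fin G.n) (j : ℕ) (β : G.Profile) (w : List ℕ → ℝ)
    (a : ℕ) (l₂ : List ℕ) (l₁ pre : List ℕ)
    (h1 : ∀ q c r, l₁ = q ++ c :: r → pre ++ q ∉ G.Info i j)
    (h2 : pre ++ l₁ ∈ G.Info i j) :
    G.nuAux i j β w pre (l₁ ++ a :: l₂) = w (pre ++ l₁) * G.prodAlong β (pre ++ l₁ ++ [a]) l₂ := by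
  induction l₁ generalizing pre with
  | nil =>
    simp only [List.append_nil] at h2
    simp [nuAux, h2]
  | cons b l ih =>
    have hn : pre ∉ G.Info i j := by simpa using h1 [] b l rfl
    have := ih (pre ++ [b]) (fun q c r hq => by
      have := h1 (b :: q) c r (by simp [hq])
      simpa using this) (by simpa using h2)
    simp only [List.cons_append, nuAux, hn, if_false, this]
    simp

theorem uCond_eq (G : EFG) (hPR : G.PerfectRecall) {i : Fin G.n} {j : ℕ} (hj : j < G.m i)
    (β : G.Profile) (μ : G.Belief) {a : ℕ} (ha : a ∈ G.infoA i j) :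
    G.uCond i j a β μ = ∑ h ∈ G.Info i j, μ i j h * G.contVal i β h a := by
  unfold uCond contVal
  simp only [Finset.mul_sum]
  rw [Finset.sum_comm, Finset.sum_filter]
  refine Finset.sum_congr rfl fun z hz => ?_
  have hzH : z ∈ G.H := (Finset.mem_filter.1 hz).1
  split_ifs with haz
  · obtain ⟨l₁, l₂, rfl⟩ := List.append_of_mem haz
    obtain ⟨h₀, hh₀⟩ := G.info_nonempty i j hj
    rw [← G.A_eq_infoA hj hh₀] at ha
    have h0 := (G.info_spec i j h₀ hj).1 hh₀
    have hl1a : l₁ ++ [a] ∈ G.H := G.prefixClosed _ hzH _ ⟨l₂, by simp⟩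
    have hl1 : l₁ ∈ G.H := G.prefixClosed _ hzH _ ⟨a :: l₂, by simp⟩
    have hu := G.act_unique l₁ h₀ a hl1 h0.1 hl1a (Finset.mem_filter.1 ha).2
    have hI : l₁ ∈ G.Info i j := (G.info_spec i j l₁ hj).2
      ⟨hl1, hu.1.trans h0.2.1, ⟨a, hl1a⟩, hu.2.trans h0.2.2.2⟩
    rw [Finset.sum_eq_single l₁]
    · have h3 : l₁ ++ [a] <+: l₁ ++ a :: l₂ := ⟨l₂, by simp⟩
      rw [if_pos h3, nu, nuAux_eq]
      · have : (l₁ ++ a :: l₂).drop (l₁.length + 1) = l₂ := by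
          rw [← List.drop_drop]; simp
        rw [this]
        simp only [List.nil_append]
        ring
      · intro q c r hq hm
        simp only [List.nil_append] at hm
        have := G.info_prefix_eq hPR hj hm hI ⟨c :: r, hq.symm⟩
        rw [this] at hq
        simp at hq
      · simpa using hI
    · intro h hh hne
      rw [if_neg, mul_zero]
      intro hp
      apply hne
      have hp1 : h <+: l₁ ++ a :: l₂ := (List.prefix_append h [a]).trans hp
      have hp2 : l₁ <+: l₁ ++ a :: l₂ := List.prefix_append _ _
      rcases List.prefix_or_prefix_of_prefix hp1 hp2 with h' | h'
      · exact G.info_prefix_eq hPR hj hh hI h'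
      · exact (G.info_prefix_eq hPR hj hI hh h').symm
    · intro h; exact absurd hI h
  · symm
    refine Finset.sum_eq_zero fun h _ => ?_
    rw [if_neg, mul_zero]
    intro hp
    exact haz (hp.subset (by simp))

theorem telescoping (G : EFG) (γ β : G.Profile) {z : List ℕ} (hz : z ∈ G.H) :
    G.omega γ z - G.omega β z = ∑ p ∈ G.H ×ˢ G.actFinset,
      if p.1 ++ [p.2] <+: z then G.omega γ p.1 * (G.moveProb γ p.1 p.2 - G.moveProb β p.1 p.2) *
        G.prodAlong β (p.1 ++ [p.2]) (z.drop (p.1.length + 1)) else 0 := by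
  have h1 : G.omega γ z - G.omega β z = ∑ k ∈ Finset.range z.length,
      (G.omega γ (z.take (k+1)) * G.prodAlong β (z.take (k+1)) (z.drop (k+1)) -
       G.omega γ (z.take k) * G.prodAlong β (z.take k) (z.drop k)) := by
    rw [Finset.sum_range_sub (fun k => G.omega γ (z.take k) * G.prodAlong β (z.take k) (z.drop k))]
    simp [omega, prodAlong]
  rw [h1, ← Finset.sum_filter]
  have key : ∀ k (hk : k < z.length), z.take k ++ [z[k]] = z.take (k+1) := by
    intro k hk; simp
  refine Finset.sum_bij (fun k hk => (z.take k, getElem z k (Finset.mem_range.1 hk))) ?_ ?_ ?_ ?_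
  · intro k hk
    have hk' := Finset.mem_range.1 hk
    have hp : z.take (k+1) <+: z := List.take_prefix _ _
    simp only [Finset.mem_filter, Finset.mem_product]
    rw [key k hk']
    exact ⟨⟨G.prefixClosed z hz _ (List.take_prefix _ _),
      G.act_mem (z.take k) _ (by rw [key k hk']; exact G.prefixClosed z hz _ hp)⟩, hp⟩
  · intro k hk k' hk' h
    have := congrArg (fun p => p.1.length) h
    have a1 := Finset.mem_range.1 hk
    have a2 := Finset.mem_range.1 hk'
    simp only [List.length_take] at this
    omega
  · rintro ⟨h, a⟩ hp
    obtain ⟨r, rfl⟩ := (Finset.mem_filter.1 hp).2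
    refine ⟨h.length, by simp, ?_⟩
    simp
  · intro k hk
    have hk' := Finset.mem_range.1 hk
    simp only
    rw [key k hk']
    have e1 : z.drop k = z[k] :: z.drop (k+1) := List.drop_eq_getElem_cons hk'
    have e2 : G.omega γ (z.take (k+1)) = G.omega γ (z.take k) * G.moveProb γ (z.take k) z[k] := by
      rw [← key k hk', omega, prodAlong_append]
      simp [prodAlong, omega]
    have e3 : (z.take k).length = k := by simp; omega
    rw [e1, e2, e3]
    simp only [prodAlong, key k hk']
    ring

theorem prodAlong_replace (G : EFG) (i : Fin G.n) (β : G.Profile) (b : ℕ → ℕ → ℝ)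
    (l pre : List ℕ) : G.prodAlong (G.replace β i b) pre l =
      ((G.recordFrom i pre l).map fun p => b p.1 p.2).prod * G.prodAlongNot i β pre l := by
  induction l generalizing pre with
  | nil => simp [prodAlong, recordFrom, prodAlongNot]
  | cons c l ih =>
    simp only [prodAlong, recordFrom, prodAlongNot, ih]
    by_cases h : G.P pre = some i
    · simp [h, moveProb, replace]; ring
    · have : G.moveProb (G.replace β i b) pre c = G.moveProb β pre c := by
        unfold moveProb
        cases h' : G.P pre with
        | none => simp
        | some q =>
          have : q ≠ i := by rintro rfl; exact h h'
          simp [replace, this]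
      simp [h, this]; ring

theorem mem_info_of (G : EFG) {i : Fin G.n} {pre : List ℕ} {c : ℕ}
    (hc : pre ++ [c] ∈ G.H) (h : G.P pre = some i) :
    G.infoIdx pre < G.m i ∧ pre ∈ G.Info i (G.infoIdx pre) ∧
      c ∈ G.infoA i (G.infoIdx pre) := by
  have hp : pre ∈ G.H := G.prefixClosed _ hc _ (List.prefix_append _ _)
  have hlt := G.infoIdx_lt i pre hp h ⟨c, hc⟩
  have hI := (G.info_spec i _ pre hlt).2 ⟨hp, h, ⟨c, hc⟩, rfl⟩
  refine ⟨hlt, hI, ?_⟩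
  rw [← G.A_eq_infoA hlt hI]
  exact Finset.mem_filter.2 ⟨G.act_mem _ _ hc, hc⟩

theorem record_nonneg (G : EFG) (i : Fin G.n) (b : ℕ → ℕ → ℝ) (hb : G.IsBehStrategy i b)
    (l pre : List ℕ) (hH : pre ++ l ∈ G.H) :
    0 ≤ ((G.recordFrom i pre l).map fun p => b p.1 p.2).prod := by
  induction l generalizing pre with
  | nil => simp [recordFrom]
  | cons c l ih =>
    have ih' := ih (pre ++ [c]) (by simpa using hH)
    have hc : pre ++ [c] ∈ G.H := G.prefixClosed _ hH _ ⟨l, by simp⟩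
    by_cases h : G.P pre = some i
    · obtain ⟨h1, h2, h3⟩ := G.mem_info_of hc h
      have := (hb _ h1).1 c h3
      simpa [recordFrom, h] using mul_nonneg this ih'
    · simpa [recordFrom, h] using ih'

theorem prodAlongNot_nonneg (G : EFG) (i : Fin G.n) (β : G.Profile) (hβ : G.IsBehProfile β)
    (l pre : List ℕ) (hH : pre ++ l ∈ G.H) : 0 ≤ G.prodAlongNot i β pre l := by
  induction l generalizing pre with
  | nil => simp [prodAlongNot]
  | cons c l ih =>
    have ih' := ih (pre ++ [c]) (by simpa using hH)
    have hc : pre ++ [c] ∈ G.H := G.prefixClosed _ hH _ ⟨l, by simp⟩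
    simp only [prodAlongNot]
    refine mul_nonneg ?_ ih'
    split_ifs with h
    · exact zero_le_one
    · unfold moveProb
      cases h' : G.P pre with
      | none => simpa using G.fc_nonneg _ _
      | some q =>
        obtain ⟨h1, h2, h3⟩ := G.mem_info_of hc h'
        exact (hβ q _ h1).1 c h3

theorem diff_eq (G : EFG) (i : Fin G.n) (β : G.Profile) (b : ℕ → ℕ → ℝ) :
    G.uExp i (G.replace β i b) - G.uExp i β =
      ∑ j ∈ Finset.range (G.m i), ∑ h ∈ G.Info i j, ∑ a ∈ G.infoA i j,
        G.omega (G.replace β i b) h * (b j a - β i j a) * G.contVal i β h a := by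
  set γ := G.replace β i b with hγ
  have h1 : G.uExp i γ - G.uExp i β = ∑ h ∈ G.H, ∑ a ∈ G.actFinset,
      G.omega γ h * (G.moveProb γ h a - G.moveProb β h a) * G.contVal i β h a := by
    unfold uExp
    rw [← Finset.sum_sub_distrib, ← Finset.sum_product']
    simp only [contVal, Finset.mul_sum]
    rw [Finset.sum_comm]
    refine Finset.sum_congr rfl fun z hz => ?_
    rw [← mul_sub, G.telescoping γ β (Finset.mem_filter.1 hz).1, Finset.mul_sum]
    refine Finset.sum_congr rfl fun p _ => ?_
    split_ifs <;> ring
  have hC : ∀ h a, h ++ [a] ∉ G.H → G.contVal i β h a = 0 := by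
    intro h a hn
    refine Finset.sum_eq_zero fun z hz => if_neg fun hp => hn ?_
    exact G.prefixClosed z (Finset.mem_filter.1 hz).1 _ hp
  rw [h1]
  have h2 : ∑ h ∈ G.H, ∑ a ∈ G.actFinset,
      G.omega γ h * (G.moveProb γ h a - G.moveProb β h a) * G.contVal i β h a =
      ∑ h ∈ G.H.filter (fun h => G.P h = some i ∧ ∃ a, h ++ [a] ∈ G.H), ∑ a ∈ G.actFinset,
      G.omega γ h * (G.moveProb γ h a - G.moveProb β h a) * G.contVal i β h a := by
    symm
    refine Finset.sum_subset (Finset.filter_subset _ _) fun h hh hn => ?_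
    refine Finset.sum_eq_zero fun a _ => ?_
    by_cases ha : h ++ [a] ∈ G.H
    · have hP : G.P h ≠ some i := fun h' => hn (Finset.mem_filter.2 ⟨hh, h', a, ha⟩)
      have : G.moveProb γ h a = G.moveProb β h a := by
        unfold moveProb
        cases h' : G.P h with
        | none => simp
        | some q =>
          have : q ≠ i := by rintro rfl; exact hP h'
          simp [hγ, replace, this]
      rw [this]; ring
    · rw [hC h a ha, mul_zero]
  rw [h2, ← Finset.sum_fiberwise_of_maps_to (g := G.infoIdx) (t := Finset.range (G.m i))]
  · refine Finset.sum_congr rfl fun j hj => ?_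
    have hj' := Finset.mem_range.1 hj
    have : (G.H.filter (fun h => G.P h = some i ∧ ∃ a, h ++ [a] ∈ G.H)).filter
        (fun h => G.infoIdx h = j) = G.Info i j := by
      ext h
      rw [G.info_spec i j h hj']
      simp only [Finset.mem_filter]
      tauto
    rw [this]
    refine Finset.sum_congr rfl fun h hh => ?_
    have hs := (G.info_spec i j h hj').1 hh
    rw [← G.A_eq_infoA hj' hh]
    symm
    have hsub : G.A h ⊆ G.actFinset := Finset.filter_subset _ _
    rw [Finset.sum_subset hsub]
    · refine Finset.sum_congr rfl fun a _ => ?_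
      simp [moveProb, hs.2.1, hs.2.2.2, hγ, replace]
    · intro a ha hn
      rw [hC h a (fun h' => hn (Finset.mem_filter.2 ⟨ha, h'⟩)), mul_zero]
  · intro h hh
    obtain ⟨h1, h2, h3⟩ := Finset.mem_filter.1 hh
    exact Finset.mem_range.2 (G.infoIdx_lt i h h1 h2 h3)

theorem best_le (s : Finset ℕ) (b c U : ℕ → ℝ) (hb : ∀ a ∈ s, 0 ≤ b a)
    (hb1 : ∑ a ∈ s, b a = 1) (hc1 : ∑ a ∈ s, c a = 1)
    (hU : ∀ a' ∈ s, ∀ a'' ∈ s, U a' < U a'' → c a' = 0) :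
    ∑ a ∈ s, (b a - c a) * U a ≤ 0 := by
  have hs : s.Nonempty := by
    rw [Finset.nonempty_iff_ne_empty]; rintro rfl; simp at hb1
  obtain ⟨m, hm, hmax⟩ := Finset.exists_max_image s U hs
  have h1 : ∑ a ∈ s, (b a - c a) * U a ≤ ∑ a ∈ s, (b a - c a) * U m := by
    refine Finset.sum_le_sum fun a ha => ?_
    have hle := hmax a ha
    rcases hle.lt_or_eq with h | h
    · rw [hU a ha m hm h]
      simpa using mul_le_mul_of_nonneg_left hle (hb a ha)
    · rw [h]
  rw [← Finset.sum_mul, Finset.sum_sub_distrib, hb1, hc1] at h1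
  simpa using h1

end EFG

/-- A semi-sequential equilibrium yields a Nash equilibrium in behavioral strategies. -/
theorem stmt15 (G : EFG) (hPR : G.PerfectRecall)
    (β : G.Profile) (μ : G.Belief) (hss : G.SemiSeqEq β μ) :
    G.IsNash β := by
  obtain ⟨hβ, hμ, hSI, hopt⟩ := hss
  refine ⟨hβ, fun i b hb => ?_⟩
  rw [← sub_nonpos, G.diff_eq]
  refine Finset.sum_nonpos fun j hj => ?_
  have hj' := Finset.mem_range.1 hj
  obtain ⟨h₀, hh₀⟩ := G.info_nonempty i j hj'
  set R := ((G.recordFrom i [] h₀).map fun p => b p.1 p.2).prod with hR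
  have hR0 : 0 ≤ R := G.record_nonneg i b hb h₀ [] (by
    simpa using ((G.info_spec i j h₀ hj').1 hh₀).1)
  have hS0 : 0 ≤ G.SInfo i j β := Finset.sum_nonneg fun h hh =>
    G.prodAlongNot_nonneg i β hβ h [] (by simpa using ((G.info_spec i j h hj').1 hh).1)
  have heq : ∑ h ∈ G.Info i j, ∑ a ∈ G.infoA i j,
        G.omega (G.replace β i b) h * (b j a - β i j a) * G.contVal i β h a =
      R * (G.SInfo i j β * ∑ a ∈ G.infoA i j, (b j a - β i j a) * G.uCond i j a β μ) := by
    rw [Finset.sum_comm, Finset.mul_sum, Finset.mul_sum]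
    refine Finset.sum_congr rfl fun a ha => ?_
    rw [G.uCond_eq hPR hj' β μ ha]
    simp only [Finset.mul_sum]
    refine Finset.sum_congr rfl fun h hh => ?_
    have h1 : G.omega (G.replace β i b) h = R * G.Sh i β h := by
      rw [EFG.omega, G.prodAlong_replace, hPR i j hj' h hh h₀ hh₀, EFG.Sh]
    rw [h1, ← hSI i j hj' h hh]
    ring
  rw [heq]
  refine mul_nonpos_of_nonneg_of_nonpos hR0 (mul_nonpos_of_nonneg_of_nonpos hS0 ?_)
  exact EFG.best_le _ _ _ _ (hb j hj').1 (hb j hj').2 (hβ i j hj').2 (hopt i j hj')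
end
end

section
/- Let Γ be a finite extensive-form game with perfect recall. If (β*, μ*) is a subgame perfect semi-sequential equilibrium, then β* is a subgame perfect equilibrium in behavioral strategies. -/
open scoped Classical

noncomputable section

namespace EFG

variable {G : EFG}

lemma aux_prodAlong_append (β : G.Profile) (l₁ : List ℕ) : ∀ (pre l₂ : List ℕ),
    G.prodAlong β pre (l₁ ++ l₂) = G.prodAlong β pre l₁ * G.prodAlong β (pre ++ l₁) l₂ := by
  induction l₁ with
  | nil => intro pre l₂; simp [prodAlong]
  | cons b t ih => intro pre l₂; simp [prodAlong, ih, mul_assoc]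

lemma aux_prodAlongNot_append (i : Fin G.n) (β : G.Profile) (l₁ : List ℕ) :
    ∀ (pre l₂ : List ℕ), G.prodAlongNot i β pre (l₁ ++ l₂) =
      G.prodAlongNot i β pre l₁ * G.prodAlongNot i β (pre ++ l₁) l₂ := by
  induction l₁ with
  | nil => intro pre l₂; simp [prodAlongNot]
  | cons b t ih => intro pre l₂; simp [prodAlongNot, ih, mul_assoc]

lemma aux_record_append (i : Fin G.n) (l₁ : List ℕ) : ∀ (pre l₂ : List ℕ),
    G.recordFrom i pre (l₁ ++ l₂) = G.recordFrom i pre l₁ ++ G.recordFrom i (pre ++ l₁) l₂ := by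
  induction l₁ with
  | nil => intro pre l₂; simp [recordFrom]
  | cons b t ih => intro pre l₂; simp [recordFrom, ih]

/-- The terms of the tree below `h` split into the root and the subtrees. -/
lemma aux_split (φ : List ℕ → ℝ) (h : List ℕ) (hh : h ∈ G.H) :
    ∑ z ∈ G.H.filter (fun z => h <+: z), φ z =
      φ h + ∑ a ∈ G.A h, ∑ z ∈ G.H.filter (fun z => h ++ [a] <+: z), φ z := by
  have hset : G.H.filter (fun z => h <+: z) =
      insert h ((G.A h).biUnion fun a => G.H.filter (fun z => h ++ [a] <+: z)) := by
    ext z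
    simp only [Finset.mem_filter, Finset.mem_insert, Finset.mem_biUnion, A]
    constructor
    · rintro ⟨hz, t, rfl⟩
      cases t with
      | nil => left; simp
      | cons a t =>
        right
        have h1 : h ++ [a] ∈ G.H := G.prefixClosed _ hz _ ⟨t, by simp⟩
        exact ⟨a, ⟨G.act_mem _ _ h1, h1⟩, hz, ⟨t, by simp⟩⟩
    · rintro (rfl | ⟨a, _, hz, t, rfl⟩)
      · exact ⟨hh, List.prefix_rfl⟩
      · exact ⟨hz, ⟨a :: t, by simp⟩⟩
  rw [hset, Finset.sum_insert, Finset.sum_biUnion]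
  · intro a _ a' _ hne
    simp only [Function.onFun]
    rw [Finset.disjoint_left]
    intro z hz hz'
    simp only [Finset.mem_filter] at hz hz'
    obtain ⟨t, rfl⟩ := hz.2
    obtain ⟨t', ht⟩ := hz'.2
    simp at ht
    exact hne ht.1.symm
  · simp only [Finset.mem_biUnion, Finset.mem_filter, not_exists, not_and]
    rintro a _ _ ⟨t, ht⟩
    simp at ht

/-- Accumulated value of `g` over the tree below `h`. -/
def auxF (β : G.Profile) (g : List ℕ → ℝ) (h : List ℕ) : ℝ :=
  ∑ z ∈ G.H.filter (fun z => h <+: z), G.prodAlong β h (z.drop h.length) * g z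

lemma auxF_rec (β : G.Profile) (g : List ℕ → ℝ) (h : List ℕ) (hh : h ∈ G.H) :
    auxF β g h = g h + ∑ a ∈ G.A h, G.moveProb β h a * auxF β g (h ++ [a]) := by
  unfold auxF
  rw [aux_split _ h hh]
  congr 1
  · simp [prodAlong]
  · refine Finset.sum_congr rfl fun a _ => ?_
    rw [Finset.mul_sum]
    refine Finset.sum_congr rfl fun z hz => ?_
    simp only [Finset.mem_filter] at hz
    obtain ⟨t, rfl⟩ := hz.2
    rw [List.drop_left, List.append_assoc, List.drop_left]
    simp [prodAlong, mul_assoc]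

lemma aux_unique (β : G.Profile) (g D D' : List ℕ → ℝ)
    (hD : ∀ h ∈ G.H, D h = g h + ∑ a ∈ G.A h, G.moveProb β h a * D (h ++ [a]))
    (hD' : ∀ h ∈ G.H, D' h = g h + ∑ a ∈ G.A h, G.moveProb β h a * D' (h ++ [a])) :
    ∀ h ∈ G.H, D h = D' h := by
  have key : ∀ k : ℕ, ∀ h ∈ G.H, G.H.sup List.length - h.length = k → D h = D' h := by
    intro k
    induction k using Nat.strong_induction_on with
    | _ k ih =>
      intro h hh hk
      rw [hD h hh, hD' h hh]
      congr 1
      refine Finset.sum_congr rfl fun a ha => ?_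
      simp only [A, Finset.mem_filter] at ha
      have h1 : (h ++ [a]).length ≤ G.H.sup List.length :=
        Finset.le_sup (f := List.length) ha.2
      have h2 : (h ++ [a]).length = h.length + 1 := by simp
      rw [ih (G.H.sup List.length - (h ++ [a]).length) (by omega) _ ha.2 rfl]
  intro h hh
  exact key _ h hh rfl

lemma aux_uExpFrom_eq (i : Fin G.n) (β : G.Profile) (h : List ℕ) :
    G.uExpFrom i β h = auxF β (fun z => if z ∈ G.Zset then G.u i z else 0) h := by
  unfold uExpFrom auxF
  simp only [mul_ite, mul_zero]
  rw [← Finset.sum_filter]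
  refine Finset.sum_congr ?_ fun z _ => mul_comm _ _
  ext z
  simp only [Zset, Finset.mem_filter]
  tauto

lemma aux_uExpFrom_rec (i : Fin G.n) (β : G.Profile) (h : List ℕ) (hh : h ∈ G.H) :
    G.uExpFrom i β h = (if h ∈ G.Zset then G.u i h else 0) +
      ∑ a ∈ G.A h, G.moveProb β h a * G.uExpFrom i β (h ++ [a]) := by
  rw [aux_uExpFrom_eq, auxF_rec _ _ _ hh]
  simp only [aux_uExpFrom_eq]

/-- The one-step gain of deviating to `b` at `h`. -/
def auxGain (β : G.Profile) (i : Fin G.n) (b : ℕ → ℕ → ℝ) (h : List ℕ) : ℝ :=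
  if G.P h = some i then
    ∑ a ∈ G.A h, (b (G.infoIdx h) a - β i (G.infoIdx h) a) * G.uExpFrom i β (h ++ [a])
  else 0

lemma aux_perfDiff (β : G.Profile) (i : Fin G.n) (b : ℕ → ℕ → ℝ) (r : List ℕ) (hr : r ∈ G.H) :
    G.uExpFrom i (G.replace β i b) r - G.uExpFrom i β r =
      auxF (G.replace β i b) (auxGain β i b) r := by
  refine aux_unique (G.replace β i b) (auxGain β i b)
    (fun r => G.uExpFrom i (G.replace β i b) r - G.uExpFrom i β r)
    (auxF (G.replace β i b) (auxGain β i b)) ?_ (fun h hh => auxF_rec _ _ h hh) r hr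
  intro h hh
  rw [aux_uExpFrom_rec i (G.replace β i b) h hh, aux_uExpFrom_rec i β h hh]
  unfold auxGain
  rw [add_sub_add_left_eq_sub, ← Finset.sum_sub_distrib]
  split_ifs with hP
  · rw [← Finset.sum_add_distrib]
    refine Finset.sum_congr rfl fun a _ => ?_
    simp only [moveProb, hP, Option.elim, replace, if_true]
    ring
  · rw [zero_add]
    refine Finset.sum_congr rfl fun a _ => ?_
    have : G.moveProb (G.replace β i b) h a = G.moveProb β h a := by
      unfold moveProb
      cases hp : G.P h with
      | none => rfl
      | some p =>
        have : p ≠ i := fun e => hP (by rw [hp, e])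
        simp [replace, this]
    rw [this]
    ring

lemma aux_noNest (hPR : G.PerfectRecall) {i : Fin G.n} {j : ℕ} (hj : j < G.m i)
    {h h' : List ℕ} (hh : h ∈ G.Info i j) (hh' : h' ∈ G.Info i j) (hp : h <+: h') : h = h' := by
  obtain ⟨t, rfl⟩ := hp
  have h1 := hPR i j hj h hh _ hh'
  rw [aux_record_append, List.nil_append] at h1
  have h2 : G.recordFrom i h t = [] := by simpa using h1
  cases t with
  | nil => simp
  | cons a t =>
    have := ((G.info_spec i j h hj).1 hh).2.1
    simp [recordFrom, this] at h2

lemma aux_infoA (i : Fin G.n) (j : ℕ) (hj : j < G.m i) {h : List ℕ} (hh : h ∈ G.Info i j) :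
    G.infoA i j = G.A h := by
  ext a
  simp only [infoA, Finset.mem_sup, A, Finset.mem_filter]
  constructor
  · rintro ⟨h', hh', ha, hm⟩
    exact ⟨ha, (G.info_actions i j hj h' hh' h hh a).1 hm⟩
  · intro ha
    exact ⟨h, hh, ha⟩

lemma aux_nuAux (i : Fin G.n) (j : ℕ) (β : G.Profile) (w : List ℕ → ℝ) (a : ℕ) (t : List ℕ)
    (l : List ℕ) : ∀ pre : List ℕ, pre ++ l ∈ G.Info i j →
      (∀ s, s <+: l → pre ++ s ∈ G.Info i j → s = l) →
      G.nuAux i j β w pre (l ++ a :: t) = w (pre ++ l) * G.prodAlong β (pre ++ l ++ [a]) t := by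
  induction l with
  | nil =>
    intro pre hm _
    rw [List.append_nil] at hm
    simp [nuAux, hm]
  | cons b l ih =>
    intro pre hm hs
    have hn : pre ∉ G.Info i j := by
      intro hpre
      have := hs [] (List.nil_prefix) (by simpa using hpre)
      simp at this
    rw [List.cons_append, nuAux, if_neg hn, ih (pre ++ [b]) (by simpa using hm)]
    · simp
    · intro s hsl hsm
      have := hs (b :: s) (by simpa using hsl) (by simpa using hsm)
      simpa using this

lemma aux_uCond (hPR : G.PerfectRecall) (i : Fin G.n) (j : ℕ) (hj : j < G.m i) (a : ℕ)
    (ha : a ∈ G.infoA i j) (β : G.Profile) (μ : G.Belief) :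
    G.uCond i j a β μ = ∑ h ∈ G.Info i j, μ i j h * G.uExpFrom i β (h ++ [a]) := by
  have hset : G.Zset.filter (fun z => a ∈ z) =
      (G.Info i j).biUnion fun h => G.Zset.filter (fun z => h ++ [a] <+: z) := by
    ext z
    simp only [Finset.mem_filter, Finset.mem_biUnion]
    constructor
    · rintro ⟨hz, haz⟩
      obtain ⟨l₁, l₂, rfl⟩ := List.append_of_mem haz
      have hzH : l₁ ++ a :: l₂ ∈ G.H := (Finset.mem_filter.1 hz).1
      have h1 : l₁ ++ [a] ∈ G.H := G.prefixClosed _ hzH _ ⟨l₂, by simp⟩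
      have h2 : l₁ ∈ G.H := G.prefixClosed _ hzH _ ⟨a :: l₂, by simp⟩
      obtain ⟨h0, hh0⟩ := G.info_nonempty i j hj
      rw [aux_infoA i j hj hh0] at ha
      have h3 : h0 ++ [a] ∈ G.H := (Finset.mem_filter.1 ha).2
      have h4 := (G.info_spec i j h0 hj).1 hh0
      have h5 := G.act_unique l₁ h0 a h2 h4.1 h1 h3
      refine ⟨l₁, (G.info_spec i j l₁ hj).2 ⟨h2, h5.1.trans h4.2.1, ⟨a, h1⟩,
        h5.2.trans h4.2.2.2⟩, hz, l₂, by simp⟩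
    · rintro ⟨h, _, hz, t, rfl⟩
      exact ⟨hz, by simp⟩
  unfold uCond
  rw [hset, Finset.sum_biUnion]
  · refine Finset.sum_congr rfl fun h hh => ?_
    unfold uExpFrom
    rw [Finset.mul_sum]
    refine Finset.sum_congr rfl fun z hz => ?_
    obtain ⟨t, rfl⟩ := (Finset.mem_filter.1 hz).2
    rw [List.drop_left]
    unfold nu
    have := aux_nuAux i j β (μ i j) a t h [] (by simpa using hh)
      (fun s hs hsm => aux_noNest hPR hj (by simpa using hsm) hh hs)
    rw [List.append_assoc, List.singleton_append, this]
    simp only [List.nil_append]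
    ring
  · intro h hh h' hh' hne
    simp only [Function.onFun]
    rw [Finset.disjoint_left]
    intro z hz hz'
    have p1 : h <+: z := (List.prefix_append h [a]).trans (Finset.mem_filter.1 hz).2
    have p2 : h' <+: z := (List.prefix_append h' [a]).trans (Finset.mem_filter.1 hz').2
    rcases List.prefix_or_prefix_of_prefix p1 p2 with p | p
    · exact hne (aux_noNest hPR hj hh hh' p)
    · exact hne (aux_noNest hPR hj hh' hh p).symm

lemma aux_factor (i : Fin G.n) (β : G.Profile) (b : ℕ → ℕ → ℝ) (t : List ℕ) : ∀ pre : List ℕ,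
    G.prodAlong (G.replace β i b) pre t = G.prodAlongNot i β pre t *
      ((G.recordFrom i pre t).map fun p => b p.1 p.2).prod := by
  induction t with
  | nil => intro pre; simp [prodAlong, prodAlongNot, recordFrom]
  | cons a t ih =>
    intro pre
    rw [prodAlong, prodAlongNot, recordFrom, ih]
    by_cases hP : G.P pre = some i
    · simp [hP, moveProb, replace]
      ring
    · have : G.moveProb (G.replace β i b) pre a = G.moveProb β pre a := by
        unfold moveProb
        cases hp : G.P pre with
        | none => rfl
        | some p =>
          have : p ≠ i := fun e => hP (by rw [hp, e])
          simp [replace, this]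
      simp [hP, this]
      ring

lemma aux_mem_info {i : Fin G.n} {h : List ℕ} {a : ℕ} (ha : h ++ [a] ∈ G.H)
    (hP : G.P h = some i) :
    G.infoIdx h < G.m i ∧ h ∈ G.Info i (G.infoIdx h) ∧ a ∈ G.infoA i (G.infoIdx h) := by
  have hh : h ∈ G.H := G.prefixClosed _ ha _ (List.prefix_append h [a])
  have hj := G.infoIdx_lt i h hh hP ⟨a, ha⟩
  have hm := (G.info_spec i _ h hj).2 ⟨hh, hP, ⟨a, ha⟩, rfl⟩
  refine ⟨hj, hm, ?_⟩
  rw [aux_infoA i _ hj hm]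
  exact Finset.mem_filter.2 ⟨G.act_mem _ _ ha, ha⟩

lemma aux_own_nonneg (i : Fin G.n) (b : ℕ → ℕ → ℝ) (hb : G.IsBehStrategy i b) (t : List ℕ) :
    ∀ pre : List ℕ, pre ++ t ∈ G.H →
      0 ≤ ((G.recordFrom i pre t).map fun p => b p.1 p.2).prod := by
  induction t with
  | nil => intro pre _; simp [recordFrom]
  | cons a t ih =>
    intro pre hm
    have h1 := ih (pre ++ [a]) (by simpa using hm)
    have h2 : pre ++ [a] ∈ G.H := G.prefixClosed _ hm _ ⟨t, by simp⟩
    rw [recordFrom]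
    by_cases hP : G.P pre = some i
    · obtain ⟨hj, _, ha⟩ := aux_mem_info h2 hP
      simp only [hP, if_true, List.singleton_append, List.map_cons, List.prod_cons]
      exact mul_nonneg ((hb _ hj).1 a ha) h1
    · simpa [hP] using h1

lemma aux_not_nonneg (i : Fin G.n) (β : G.Profile) (hβ : G.IsBehProfile β) (t : List ℕ) :
    ∀ pre : List ℕ, pre ++ t ∈ G.H → 0 ≤ G.prodAlongNot i β pre t := by
  induction t with
  | nil => intro pre _; simp [prodAlongNot]
  | cons a t ih =>
    intro pre hm
    have h1 := ih (pre ++ [a]) (by simpa using hm)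
    have h2 : pre ++ [a] ∈ G.H := G.prefixClosed _ hm _ ⟨t, by simp⟩
    rw [prodAlongNot]
    refine mul_nonneg ?_ h1
    split_ifs with hP
    · exact zero_le_one
    · unfold moveProb
      cases hp : G.P pre with
      | none => exact G.fc_nonneg _ _
      | some p =>
        obtain ⟨hj, _, ha⟩ := aux_mem_info h2 hp
        exact (hβ p _ hj).1 a ha

/-- A subgame root strictly before one history of an information set is strictly before all. -/
lemma aux_root_all (hPR : G.PerfectRecall) {i : Fin G.n} {j : ℕ} (hj : j < G.m i)
    {r h h' : List ℕ} (hr : G.IsSubgameRoot r) (hh : h ∈ G.Info i j) (hh' : h' ∈ G.Info i j)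
    (hp : r <+: h) (hne : r ∉ G.Info i j) : r <+: h'.dropLast := by
  have h1 : r <+: h' := by
    rcases hr.2 i j hj with H | H
    · exact H h' hh'
    · exact absurd hp (H h hh)
  obtain ⟨t, rfl⟩ := h1
  have ht : t ≠ [] := by
    rintro rfl
    exact hne (by simpa using hh')
  rw [List.dropLast_append_of_ne_nil ht]
  exact List.prefix_append _ _

lemma aux_root_notMem (hPR : G.PerfectRecall) {i : Fin G.n} {j : ℕ} (hj : j < G.m i)
    {r h : List ℕ} (hh : h ∈ G.Info i j) (hp : r <+: h.dropLast) (hne : h ≠ []) :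
    r ∉ G.Info i j := by
  intro hm
  have h1 := aux_noNest hPR hj hm hh (hp.trans (List.dropLast_prefix h))
  have h2 := hp.length_le
  rw [h1, List.length_dropLast] at h2
  have := List.length_pos_of_ne_nil hne
  omega

lemma aux_consistent (hPR : G.PerfectRecall) (β : G.Profile) (μ : G.Belief)
    (hμ : G.IsBelief μ) (hY : G.YConsistent β μ) {i : Fin G.n} {j : ℕ} (hj : j < G.m i)
    {r : List ℕ} (hr : G.IsSubgameRoot r) (hin : ∀ h ∈ G.Info i j, r <+: h)
    {h : List ℕ} (hh : h ∈ G.Info i j) :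
    G.prodAlongNot i β r (h.drop r.length) =
      (∑ h' ∈ G.Info i j, G.prodAlongNot i β r (h'.drop r.length)) * μ i j h := by
  by_cases hrI : r ∈ G.Info i j
  · have hset : G.Info i j = {r} := by
      ext x
      rw [Finset.mem_singleton]
      constructor
      · intro hx
        exact (aux_noNest hPR hj hrI hx (hin x hx)).symm
      · rintro rfl
        exact hrI
    have hhr : h = r := (aux_noNest hPR hj hrI hh (hin h hh)).symm
    have h1 := (hμ i j hj).2
    rw [hset, Finset.sum_singleton] at h1
    rw [hset, Finset.sum_singleton, hhr, h1, mul_one]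
  · have hlt : ∀ x ∈ G.Info i j, r <+: x.dropLast := fun x hx =>
      aux_root_all hPR hj hr hx hx (hin x hx) hrI
    have hnil : ∀ x ∈ G.Info i j, x ≠ [] := by
      rintro x hx rfl
      have h1 : r = [] := by simpa using hin _ hx
      exact hrI (h1 ▸ hx)
    -- depth roots
    have hroot : ∀ x ∈ G.Info i j, ∃ r', G.IsSubgameRoot r' ∧ r' <+: x.dropLast ∧
        r'.length = G.sgDepthHist x ∧ r.length ≤ r'.length := by
      intro x hx
      have hmem : r ∈ G.H.filter fun r => G.IsSubgameRoot r ∧ r <+: x.dropLast :=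
        Finset.mem_filter.2 ⟨hr.1, hr, hlt x hx⟩
      obtain ⟨r', hr', he⟩ := Finset.exists_mem_eq_sup _ ⟨r, hmem⟩ List.length
      have hle := Finset.le_sup (f := List.length) hmem
      have hr'' := (Finset.mem_filter.1 hr').2
      exact ⟨r', hr''.1, hr''.2, he.symm, he ▸ hle⟩
    have hmono : ∀ x ∈ G.Info i j, ∀ y ∈ G.Info i j, G.sgDepthHist x ≤ G.sgDepthHist y := by
      intro x hx y hy
      obtain ⟨r', h1, h2, h3, _⟩ := hroot x hx
      rw [← h3]
      refine Finset.le_sup (f := List.length) (Finset.mem_filter.2 ⟨h1.1, h1, ?_⟩)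
      exact aux_root_all hPR hj h1 hx hy (h2.trans (List.dropLast_prefix x))
        (aux_root_notMem hPR hj hx h2 (hnil x hx))
    obtain ⟨r', h1, h2, h3, h4⟩ := hroot h hh
    have hr'p : ∀ x ∈ G.Info i j, r' <+: x := fun x hx =>
      (aux_root_all hPR hj h1 hh hx (h2.trans (List.dropLast_prefix h))
        (aux_root_notMem hPR hj hh h2 (hnil h hh))).trans (List.dropLast_prefix x)
    have hrr' : r <+: r' := List.prefix_of_prefix_length_le (hin h hh) (hr'p h hh) h4
    obtain ⟨s, rfl⟩ := hrr'
    have hS : ∀ x ∈ G.Info i j, G.prodAlongNot i β r (x.drop r.length) =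
        G.prodAlongNot i β r s * G.Yh i β x := by
      intro x hx
      have hd : G.sgDepthHist x = (r ++ s).length := by
        rw [h3]
        exact le_antisymm (hmono x hx h hh) (hmono h hh x hx)
      unfold Yh
      rw [hd]
      obtain ⟨t, rfl⟩ := hr'p x hx
      rw [List.take_left, List.drop_left, List.append_assoc, List.drop_left,
        aux_prodAlongNot_append]
    rw [hS h hh, Finset.sum_congr rfl hS, ← Finset.mul_sum, mul_assoc, ← hY i j hj h hh]
    rfl

lemma aux_opt (s : Finset ℕ) (p q U : ℕ → ℝ) (hp : ∀ a ∈ s, 0 ≤ p a) (hq : ∀ a ∈ s, 0 ≤ q a)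
    (hp1 : ∑ a ∈ s, p a = 1) (hq1 : ∑ a ∈ s, q a = 1)
    (hopt : ∀ a' ∈ s, ∀ a'' ∈ s, U a' < U a'' → p a' = 0) :
    ∑ a ∈ s, (q a - p a) * U a ≤ 0 := by
  have hne : s.Nonempty := by
    rw [Finset.nonempty_iff_ne_empty]
    rintro rfl
    simp at hp1
  obtain ⟨m, hm, hmax⟩ := Finset.exists_max_image s U hne
  have e1 : ∑ a ∈ s, p a * U a = U m := by
    rw [← one_mul (U m), ← hp1, Finset.sum_mul]
    refine Finset.sum_congr rfl fun a ha => ?_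
    rcases (hmax a ha).lt_or_eq with h | h
    · rw [hopt a ha m hm h]; simp
    · rw [h]
  have e2 : ∑ a ∈ s, q a * U a ≤ U m := by
    rw [← one_mul (U m), ← hq1, Finset.sum_mul]
    exact Finset.sum_le_sum fun a ha => mul_le_mul_of_nonneg_left (hmax a ha) (hq a ha)
  simp only [sub_mul, Finset.sum_sub_distrib]
  linarith

/-- The contribution of one information set to the deviation gain is nonpositive. -/
lemma aux_info_le (hPR : G.PerfectRecall) (β : G.Profile) (μ : G.Belief)
    (hss : G.SubgameSemiSeqEq β μ) (i : Fin G.n) (b : ℕ → ℕ → ℝ) (hb : G.IsBehStrategy i b)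
    {j : ℕ} (hj : j < G.m i) {r : List ℕ} (hr : G.IsSubgameRoot r)
    (hin : ∀ h ∈ G.Info i j, r <+: h) :
    ∑ h ∈ G.Info i j, G.prodAlong (G.replace β i b) r (h.drop r.length) * auxGain β i b h ≤ 0 := by
  obtain ⟨hβ, hμ, hY, hopt⟩ := hss
  obtain ⟨h0, hh0⟩ := G.info_nonempty i j hj
  set own : ℝ := ((G.recordFrom i r (h0.drop r.length)).map fun p => b p.1 p.2).prod with hown
  set S : ℝ := ∑ h' ∈ G.Info i j, G.prodAlongNot i β r (h'.drop r.length) with hS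
  have hmemH : ∀ h ∈ G.Info i j, r ++ h.drop r.length ∈ G.H := by
    intro h hh
    obtain ⟨t, rfl⟩ := hin h hh
    rw [List.drop_left]
    exact ((G.info_spec i j _ hj).1 hh).1
  have hown0 : 0 ≤ own := aux_own_nonneg i b hb _ r (hmemH h0 hh0)
  have hS0 : 0 ≤ S := Finset.sum_nonneg fun h hh => aux_not_nonneg i β hβ _ r (hmemH h hh)
  have hrec : ∀ h ∈ G.Info i j,
      G.recordFrom i r (h.drop r.length) = G.recordFrom i r (h0.drop r.length) := by
    intro h hh
    have h1 := hPR i j hj h hh h0 hh0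
    obtain ⟨t, rfl⟩ := hin h hh
    obtain ⟨t0, rfl⟩ := hin h0 hh0
    rw [List.drop_left, List.drop_left]
    rw [aux_record_append, aux_record_append] at h1
    simpa using h1
  have hterm : ∀ h ∈ G.Info i j,
      G.prodAlong (G.replace β i b) r (h.drop r.length) * auxGain β i b h =
      ∑ a ∈ G.infoA i j, own * S * ((b j a - β i j a) *
        (μ i j h * G.uExpFrom i β (h ++ [a]))) := by
    intro h hh
    have hsp := (G.info_spec i j h hj).1 hh
    rw [aux_factor, hrec h hh, aux_consistent hPR β μ hμ hY hj hr hin hh, auxGain,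
      if_pos hsp.2.1, hsp.2.2.2, ← aux_infoA i j hj hh, Finset.mul_sum]
    refine Finset.sum_congr rfl fun a _ => ?_
    ring
  rw [Finset.sum_congr rfl hterm, Finset.sum_comm]
  have hU : ∀ a ∈ G.infoA i j, ∑ h ∈ G.Info i j, own * S * ((b j a - β i j a) *
        (μ i j h * G.uExpFrom i β (h ++ [a]))) =
      own * S * ((b j a - β i j a) * G.uCond i j a β μ) := by
    intro a ha
    rw [aux_uCond hPR i j hj a ha, ← Finset.mul_sum, ← Finset.mul_sum]
  rw [Finset.sum_congr rfl hU, ← Finset.mul_sum]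
  refine mul_nonpos_of_nonneg_of_nonpos (mul_nonneg hown0 hS0) ?_
  exact aux_opt _ (β i j) (b j) (fun a => G.uCond i j a β μ) (hβ i j hj).1 (hb j hj).1
    (hβ i j hj).2 (hb j hj).2 (hopt i j hj)

lemma aux_main (hPR : G.PerfectRecall) (β : G.Profile) (μ : G.Belief)
    (hss : G.SubgameSemiSeqEq β μ) (i : Fin G.n) (b : ℕ → ℕ → ℝ) (hb : G.IsBehStrategy i b)
    {r : List ℕ} (hr : G.IsSubgameRoot r) :
    auxF (G.replace β i b) (auxGain β i b) r ≤ 0 := by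
  unfold auxF
  set φ : List ℕ → ℝ := fun z =>
    G.prodAlong (G.replace β i b) r (z.drop r.length) * auxGain β i b z with hφ
  -- restrict to the decision nodes of player `i`
  have e1 : ∑ z ∈ G.H.filter (fun z => r <+: z), φ z =
      ∑ z ∈ (G.H.filter (fun z => r <+: z)).filter
        (fun z => G.P z = some i ∧ ∃ a, z ++ [a] ∈ G.H), φ z := by
    symm
    refine Finset.sum_filter_of_ne fun z hz hne => ?_
    by_contra hcon
    apply hne
    have : auxGain β i b z = 0 := by
      unfold auxGain
      split_ifs with hP
      · refine Finset.sum_eq_zero fun a ha => ?_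
        exact absurd ⟨hP, a, (Finset.mem_filter.1 ha).2⟩ hcon
      · rfl
    simp [hφ, this]
  have e2 := Finset.sum_fiberwise_of_maps_to (s := (G.H.filter (fun z => r <+: z)).filter
        (fun z => G.P z = some i ∧ ∃ a, z ++ [a] ∈ G.H)) (t := Finset.range (G.m i))
        (g := G.infoIdx) (by
          intro z hz
          simp only [Finset.mem_filter] at hz
          exact Finset.mem_range.2 (G.infoIdx_lt i z hz.1.1 hz.2.1 hz.2.2)) φ
  have e3 : ∑ z ∈ G.H.filter (fun z => r <+: z), φ z ≤ 0 := by
    rw [e1, ← e2]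
    refine Finset.sum_nonpos fun j hjm => ?_
    have hj := Finset.mem_range.1 hjm
    rcases hr.2 i j hj with H | H
    · have hset : ((G.H.filter (fun z => r <+: z)).filter
        (fun z => G.P z = some i ∧ ∃ a, z ++ [a] ∈ G.H)).filter (fun z => G.infoIdx z = j) =
          G.Info i j := by
        ext z
        have h1 := G.info_spec i j z hj
        have h2 := H z
        simp only [Finset.mem_filter]
        tauto
      rw [hset]
      exact aux_info_le hPR β μ hss i b hb hj hr H
    · refine le_of_eq (Finset.sum_eq_zero fun z hz => ?_)
      simp only [Finset.mem_filter] at hz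
      exact absurd hz.1.1.2 (H z ((G.info_spec i j z hj).2
        ⟨hz.1.1.1, hz.1.2.1, hz.1.2.2, hz.2⟩))
  exact e3

end EFG

/-- A subgame perfect semi-sequential equilibrium yields a subgame perfect equilibrium in
behavioral strategies. -/
theorem stmt16 (G : EFG) (hPR : G.PerfectRecall)
    (β : G.Profile) (μ : G.Belief) (hss : G.SubgameSemiSeqEq β μ) :
    G.IsSubgamePerfect β := by
  refine ⟨hss.1, fun r hr i b hb => ?_⟩
  have h1 := EFG.aux_perfDiff β i b r hr.1
  have h2 := EFG.aux_main hPR β μ hss i b hb hr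
  linarith
end
end

section
/- Let Γ be a finite extensive-form game with perfect recall and suppose (β*, β̃*, μ*) satisfies the Nash characterization. Then for every i ∈ N and j ∈ M_i, u^i(β* ∧ I_i^j) = u^i(ϱ^i_{I_i^j}(β*, β̃*) ∧ I_i^j). -/
open scoped Classical

noncomputable section

namespace EFG

theorem rec_append (G : EFG) (i : Fin G.n) (l1 l2 : List ℕ) : ∀ pre : List ℕ,
    G.recordFrom i pre (l1 ++ l2) = G.recordFrom i pre l1 ++ G.recordFrom i (pre ++ l1) l2 := by
  induction l1 with
  | nil => intro pre; simp [recordFrom]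
  | cons b t ih => intro pre; simp [recordFrom, ih]

theorem not_append (G : EFG) (i : Fin G.n) (β : G.Profile) (l1 l2 : List ℕ) : ∀ pre : List ℕ,
    G.prodAlongNot i β pre (l1 ++ l2)
      = G.prodAlongNot i β pre l1 * G.prodAlongNot i β (pre ++ l1) l2 := by
  induction l1 with
  | nil => intro pre; simp [prodAlongNot]
  | cons b t ih => intro pre; simp [prodAlongNot, ih, mul_assoc]

theorem rec_split (G : EFG) (i : Fin G.n) (rest : List ℕ) :
    ∀ (pre : List ℕ) (l1 l2 : List (ℕ × ℕ)) (q a : ℕ),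
    G.recordFrom i pre rest = l1 ++ (q, a) :: l2 →
    ∃ t1 t2, rest = t1 ++ a :: t2 ∧ G.P (pre ++ t1) = some i ∧ G.infoIdx (pre ++ t1) = q ∧
      G.recordFrom i pre t1 = l1 ∧ G.recordFrom i (pre ++ t1 ++ [a]) t2 = l2 := by
  induction rest with
  | nil => intro pre l1 l2 q a h; simp [recordFrom] at h
  | cons b t ih =>
    intro pre l1 l2 q a h
    by_cases hP : G.P pre = some i
    · simp only [recordFrom, hP, if_true, List.singleton_append] at h
      cases l1 with
      | nil =>
        simp only [List.nil_append, List.cons.injEq, Prod.mk.injEq] at h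
        obtain ⟨⟨h1, h2⟩, h3⟩ := h
        subst h2
        exact ⟨[], t, by simp, by simpa using hP, by simpa using h1, by simp [recordFrom],
          by simpa using h3⟩
      | cons x l1 =>
        simp only [List.cons_append, List.cons.injEq] at h
        obtain ⟨h1, h2⟩ := h
        obtain ⟨t1, t2, e1, e2, e3, e4, e5⟩ := ih _ _ _ _ _ h2
        exact ⟨b :: t1, t2, by simp [e1], by simpa using e2, by simpa using e3,
          by simp [recordFrom, hP, e4, h1], by simpa using e5⟩
    · simp only [recordFrom, hP, if_false, List.nil_append] at h
      obtain ⟨t1, t2, e1, e2, e3, e4, e5⟩ := ih _ _ _ _ _ h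
      exact ⟨b :: t1, t2, by simp [e1], by simpa using e2, by simpa using e3,
          by simp [recordFrom, hP, e4], by simpa using e5⟩

theorem info_iff (G : EFG) (i : Fin G.n) (j : ℕ) (hj : j < G.m i) (pre : List ℕ) (b : ℕ)
    (h : pre ++ [b] ∈ G.H) : pre ∈ G.Info i j ↔ G.P pre = some i ∧ G.infoIdx pre = j := by
  rw [G.info_spec i j pre hj]
  have : pre ∈ G.H := G.prefixClosed _ h _ (List.prefix_append _ _)
  constructor
  · rintro ⟨_, h1, _, h2⟩; exact ⟨h1, h2⟩
  · rintro ⟨h1, h2⟩; exact ⟨this, h1, ⟨b, h⟩, h2⟩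

theorem mem_infoA (G : EFG) (i : Fin G.n) (j a : ℕ) :
    a ∈ G.infoA i j ↔ ∃ h ∈ G.Info i j, h ++ [a] ∈ G.H := by
  simp only [infoA, Finset.mem_sup, A, Finset.mem_filter]
  constructor
  · rintro ⟨h, h1, _, h2⟩; exact ⟨h, h1, h2⟩
  · rintro ⟨h, h1, h2⟩; exact ⟨h, h1, G.act_mem _ _ h2, h2⟩

/-- The common record at an information set. -/
def XX (G : EFG) (i : Fin G.n) (j : ℕ) : List (ℕ × ℕ) :=
  if h : (G.Info i j).Nonempty then G.recordFrom i [] h.choose else []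

theorem XX_eq (G : EFG) (hPR : G.PerfectRecall) (i : Fin G.n) (j : ℕ) (hj : j < G.m i)
    (h : List ℕ) (hh : h ∈ G.Info i j) : G.recordFrom i [] h = G.XX i j := by
  have : (G.Info i j).Nonempty := ⟨h, hh⟩
  rw [XX, dif_pos this]
  exact hPR i j hj _ hh _ this.choose_spec

theorem F1 (G : EFG) (hPR : G.PerfectRecall) (i : Fin G.n) (z : List ℕ) (hz : z ∈ G.H)
    (l1 l2 : List (ℕ × ℕ)) (q a : ℕ) (h : G.recordFrom i [] z = l1 ++ (q, a) :: l2) :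
    q < G.m i ∧ a ∈ G.infoA i q ∧ a ∈ z ∧ l1 = G.XX i q := by
  obtain ⟨t1, t2, e1, e2, e3, e4, e5⟩ := G.rec_split i z _ _ _ _ _ h
  simp only [List.nil_append] at e2 e3
  have hH : t1 ++ [a] ∈ G.H := G.prefixClosed _ hz _ (by rw [e1]; exact ⟨t2, by simp⟩)
  have hH' : t1 ∈ G.H := G.prefixClosed _ hH _ (List.prefix_append _ _)
  have hq : q < G.m i := by
    rw [← e3]; exact G.infoIdx_lt i t1 hH' e2 ⟨a, hH⟩
  have hI : t1 ∈ G.Info i q := (G.info_iff i q hq t1 a hH).2 ⟨e2, e3⟩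
  exact ⟨hq, (G.mem_infoA i q a).2 ⟨t1, hI, hH⟩, by simp [e1],
    by rw [← e4]; exact G.XX_eq hPR i q hq t1 hI⟩

theorem F2 (G : EFG) (i : Fin G.n) (z : List ℕ) (hz : z ∈ G.H)
    (q a : ℕ) (hq : q < G.m i) (ha : a ∈ G.infoA i q) (haz : a ∈ z) :
    (q, a) ∈ G.recordFrom i [] z := by
  obtain ⟨s, t, rfl⟩ := List.append_of_mem haz
  have hH : s ++ [a] ∈ G.H := G.prefixClosed _ hz _ ⟨t, by simp⟩
  have hH' : s ∈ G.H := G.prefixClosed _ hH _ (List.prefix_append _ _)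
  obtain ⟨h, h1, h2⟩ := (G.mem_infoA i q a).1 ha
  have h3 := (G.info_iff i q hq h a h2).1 h1
  have h4 : h ∈ G.H := G.prefixClosed _ h2 _ (List.prefix_append _ _)
  obtain ⟨k1, k2⟩ := G.act_unique s h a hH' h4 hH h2
  rw [rec_append]
  simp [recordFrom, k1, k2, h3.1, h3.2]

theorem F2' (G : EFG) (hPR : G.PerfectRecall) (i : Fin G.n) (z : List ℕ) (hz : z ∈ G.H)
    (q a : ℕ) (hq : q < G.m i) (ha : a ∈ G.infoA i q) :
    a ∈ z ↔ (q, a) ∈ G.recordFrom i [] z := by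
  refine ⟨G.F2 i z hz q a hq ha, fun h => ?_⟩
  obtain ⟨s, t, e⟩ := List.append_of_mem h
  exact (G.F1 hPR i z hz _ _ _ _ e).2.2.1

theorem thru_iff (G : EFG) (hPR : G.PerfectRecall) (i : Fin G.n) (z : List ℕ) (hz : z ∈ G.H)
    (q : ℕ) (hq : q < G.m i) :
    (∃ b ∈ z, b ∈ G.infoA i q) ↔
      ∃ a l, G.recordFrom i [] z = G.XX i q ++ (q, a) :: l := by
  constructor
  · rintro ⟨b, h1, h2⟩
    obtain ⟨s, t, e⟩ := List.append_of_mem (G.F2 i z hz q b hq h2 h1)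
    exact ⟨b, t, by rw [e, (G.F1 hPR i z hz _ _ _ _ e).2.2.2]⟩
  · rintro ⟨a, l, e⟩
    have := G.F1 hPR i z hz _ _ _ _ e
    exact ⟨a, this.2.2.1, this.2.1⟩

theorem XX_rec (G : EFG) (hPR : G.PerfectRecall) (i : Fin G.n) (q : ℕ) (hq : q < G.m i) :
    ∃ h ∈ G.H, h ∈ G.Info i q ∧ G.recordFrom i [] h = G.XX i q := by
  obtain ⟨h, hh⟩ := G.info_nonempty i q hq
  exact ⟨h, ((G.info_spec i q h hq).1 hh).1, hh, G.XX_eq hPR i q hq h hh⟩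

/-- Splitting `XX`: prefixes of an `XX` are `XX`. -/
theorem XX_split (G : EFG) (hPR : G.PerfectRecall) (i : Fin G.n) (q : ℕ) (hq : q < G.m i)
    (l1 l2 : List (ℕ × ℕ)) (s a : ℕ) (h : G.XX i q = l1 ++ (s, a) :: l2) : l1 = G.XX i s := by
  obtain ⟨z, hz, _, e⟩ := G.XX_rec hPR i q hq
  exact (G.F1 hPR i z hz _ _ _ _ (e.trans h)).2.2.2

theorem rho_cond (G : EFG) (hPR : G.PerfectRecall) (i : Fin G.n) (j q : ℕ)
    (hj : j < G.m i) (hq : q < G.m i) :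
    (∃ h ∈ G.Info i q, ∃ b ∈ h, b ∈ G.infoA i j) ↔ ∃ a, (j, a) ∈ G.XX i q := by
  constructor
  · rintro ⟨h, h1, b, h2, h3⟩
    rw [← G.XX_eq hPR i q hq h h1]
    exact ⟨b, G.F2 i h ((G.info_spec i q h hq).1 h1).1 j b hj h3 h2⟩
  · rintro ⟨a, ha⟩
    obtain ⟨z, hz, h1, e⟩ := G.XX_rec hPR i q hq
    rw [← e] at ha
    obtain ⟨s, t, e'⟩ := List.append_of_mem ha
    have := G.F1 hPR i z hz _ _ _ _ e'
    exact ⟨z, h1, a, this.2.2.1, this.2.1⟩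

theorem rho_i (G : EFG) (hPR : G.PerfectRecall) (i : Fin G.n) (j q : ℕ)
    (hj : j < G.m i) (hq : q < G.m i) (β βt : G.Profile) :
    G.rho i j β βt i q = if ∃ a, (j, a) ∈ G.XX i q then βt i q else β i q := by
  simp only [rho, true_and, G.rho_cond hPR i j q hj hq]

theorem rho_ne (G : EFG) (i : Fin G.n) (j : ℕ) (β βt : G.Profile) (p : Fin G.n) (hp : p ≠ i) :
    G.rho i j β βt p = β p := by
  funext q; simp [rho, hp]

theorem moveProb_ne (G : EFG) (i : Fin G.n) (β γ : G.Profile) (hγ : ∀ p, p ≠ i → γ p = β p)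
    (h : List ℕ) (a : ℕ) (hP : G.P h ≠ some i) : G.moveProb γ h a = G.moveProb β h a := by
  unfold moveProb
  cases hh : G.P h with
  | none => simp
  | some p => simp [hγ p (by rintro rfl; exact hP hh)]

theorem prodAlong_eq (G : EFG) (i : Fin G.n) (β γ : G.Profile) (hγ : ∀ p, p ≠ i → γ p = β p)
    (rest : List ℕ) : ∀ pre, G.prodAlong γ pre rest = G.prodAlongNot i β pre rest *
      ((G.recordFrom i pre rest).map (fun x => γ i x.1 x.2)).prod := by
  induction rest with
  | nil => intro pre; simp [prodAlong, prodAlongNot, recordFrom]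
  | cons b t ih =>
    intro pre
    by_cases hP : G.P pre = some i
    · simp only [prodAlong, prodAlongNot, recordFrom, hP, if_true, ih]
      simp [moveProb, hP]; ring
    · simp only [prodAlong, prodAlongNot, recordFrom, hP, if_false, ih,
        G.moveProb_ne i β γ hγ pre b hP]
      simp; ring

theorem prodAlongSkip_eq (G : EFG) (i : Fin G.n) (j : ℕ) (hj : j < G.m i) (β γ : G.Profile)
    (hγ : ∀ p, p ≠ i → γ p = β p)
    (rest : List ℕ) : ∀ pre, pre ++ rest ∈ G.H →
      G.prodAlongSkip i j γ pre rest = G.prodAlongNot i β pre rest *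
      ((G.recordFrom i pre rest).map (fun x => if x.1 = j then 1 else γ i x.1 x.2)).prod := by
  induction rest with
  | nil => intro pre _; simp [prodAlongSkip, prodAlongNot, recordFrom]
  | cons b t ih =>
    intro pre hH
    have hI := G.info_iff i j hj pre b (G.prefixClosed _ hH _ ⟨t, by simp⟩)
    have ih' := ih (pre ++ [b]) (by simpa using hH)
    by_cases hP : G.P pre = some i
    · simp only [prodAlongSkip, prodAlongNot, recordFrom, hP, if_true, ih', hI, true_and]
      by_cases hj : G.infoIdx pre = j
      · simp [hj]
      · simp [moveProb, hP, hj]; ring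
    · simp only [prodAlongSkip, prodAlongNot, recordFrom, hP, if_false, ih', hI,
        G.moveProb_ne i β γ hγ pre b hP]
      simp; ring

theorem nuAux_eq_s17 (G : EFG) (i : Fin G.n) (j : ℕ) (hj : j < G.m i) (β γ : G.Profile)
    (hγ : ∀ p, p ≠ i → γ p = β p) (w : List ℕ → ℝ) (c : ℝ)
    (hw : ∀ h ∈ G.Info i j, c * w h = G.Sh i β h)
    (rest : List ℕ) : ∀ (pre : List ℕ) (l1 l2 : List (ℕ × ℕ)) (a : ℕ), pre ++ rest ∈ G.H →
      G.recordFrom i pre rest = l1 ++ (j, a) :: l2 → (∀ x ∈ l1, x.1 ≠ j) →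
      c * G.nuAux i j γ w pre rest = G.Sh i β (pre ++ rest) *
      (l2.map (fun x => γ i x.1 x.2)).prod := by
  induction rest with
  | nil => intro pre l1 l2 a _ h; simp [recordFrom] at h
  | cons b t ih =>
    intro pre l1 l2 a hH h hl1
    have hI := G.info_iff i j hj pre b (G.prefixClosed _ hH _ ⟨t, by simp⟩)
    have ih' := ih (pre ++ [b])
    by_cases hin : pre ∈ G.Info i j
    · obtain ⟨hP, hidx⟩ := hI.1 hin
      simp only [recordFrom, hP, if_true, List.singleton_append] at h
      have hl : l1 = [] := by
        cases l1 with
        | nil => rfl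
        | cons x l1 =>
          simp only [List.cons_append, List.cons.injEq] at h
          exact absurd hidx (by have := hl1 x (by simp); rw [← h.1] at this; exact this)
      subst hl
      simp only [List.nil_append, List.cons.injEq, Prod.mk.injEq] at h
      simp only [nuAux, hin, if_true]
      rw [← mul_assoc, hw pre hin, G.prodAlong_eq i β γ hγ, h.2]
      have : G.Sh i β (pre ++ b :: t) = G.Sh i β pre * G.prodAlongNot i β (pre ++ [b]) t := by
        unfold Sh
        rw [not_append]
        simp [prodAlongNot, hP]
      rw [this]; ring
    · simp only [nuAux, hin, if_false]
      have e : pre ++ b :: t = pre ++ [b] ++ t := by simp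
      rw [e] at hH ⊢
      by_cases hP : G.P pre = some i
      · simp only [recordFrom, hP, if_true, List.singleton_append] at h
        cases l1 with
        | nil =>
          simp only [List.nil_append, List.cons.injEq, Prod.mk.injEq] at h
          exact absurd (hI.2 ⟨hP, h.1.1⟩) hin
        | cons x l1 =>
          simp only [List.cons_append, List.cons.injEq] at h
          exact ih' l1 l2 a hH h.2 (fun y hy => hl1 y (by simp [hy]))
      · simp only [recordFrom, hP, if_false, List.nil_append] at h
        exact ih' l1 l2 a hH h hl1

theorem not_nonneg (G : EFG) (i : Fin G.n) (β : G.Profile) (hβ : G.IsBehProfile β)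
    (rest : List ℕ) : ∀ pre, pre ++ rest ∈ G.H → 0 ≤ G.prodAlongNot i β pre rest := by
  induction rest with
  | nil => intro pre _; simp [prodAlongNot]
  | cons b t ih =>
    intro pre hH
    have hb : pre ++ [b] ∈ G.H := G.prefixClosed _ hH _ ⟨t, by simp⟩
    have hp : pre ∈ G.H := G.prefixClosed _ hb _ (List.prefix_append _ _)
    refine mul_nonneg ?_ (ih _ (by simpa using hH))
    split_ifs
    · exact zero_le_one
    · unfold moveProb
      cases hh : G.P pre with
      | none => simpa using G.fc_nonneg _ _
      | some p =>
        have hlt := G.infoIdx_lt p pre hp hh ⟨b, hb⟩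
        exact (hβ p _ hlt).1 b ((G.mem_infoA _ _ _).2
          ⟨pre, (G.info_iff p _ hlt pre b hb).2 ⟨hh, rfl⟩, hb⟩)

/-- At an information set, `XX i j` does not contain `j`. -/
theorem XX_self (G : EFG) (hPR : G.PerfectRecall) (i : Fin G.n) (j : ℕ) (hj : j < G.m i)
    (a : ℕ) : (j, a) ∉ G.XX i j := by
  intro h
  obtain ⟨s, t, e⟩ := List.append_of_mem h
  have := G.XX_split hPR i j hj _ _ _ _ e
  have h2 := congrArg List.length e
  rw [this] at h2
  simp at h2

/-- If `s` occurs in `XX i q` then `q` does not occur in `XX i s`. -/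
theorem XX_anti (G : EFG) (hPR : G.PerfectRecall) (i : Fin G.n) (q s : ℕ) (hq : q < G.m i)
    (a b : ℕ) (h : (s, a) ∈ G.XX i q) : (q, b) ∉ G.XX i s := by
  intro h'
  obtain ⟨l1, l2, e⟩ := List.append_of_mem h
  have := G.XX_split hPR i q hq _ _ _ _ e
  apply G.XX_self hPR i q hq b
  rw [e, this]; simp [h']

theorem after_ne (G : EFG) (hPR : G.PerfectRecall) (i : Fin G.n) (z : List ℕ) (hz : z ∈ G.H)
    (j a : ℕ) (l : List (ℕ × ℕ))
    (e : G.recordFrom i [] z = G.XX i j ++ (j, a) :: l) : ∀ x ∈ l, x.1 ≠ j := by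
  rintro ⟨q, b⟩ hx rfl
  obtain ⟨l1, l2, rfl⟩ := List.append_of_mem hx
  have := (G.F1 hPR i z hz (G.XX i q ++ (q, a) :: l1) l2 q b (by rw [e]; simp)).2.2.2
  have h2 := congrArg List.length this
  simp at h2

theorem mem_rec_split (G : EFG) (hPR : G.PerfectRecall) (i : Fin G.n) (z : List ℕ) (hz : z ∈ G.H)
    (j a : ℕ) (h : (j, a) ∈ G.recordFrom i [] z) :
    ∃ l, G.recordFrom i [] z = G.XX i j ++ (j, a) :: l := by
  obtain ⟨s, t, e⟩ := List.append_of_mem h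
  exact ⟨t, by rw [e, (G.F1 hPR i z hz _ _ _ _ e).2.2.2]⟩

theorem Z_sub (G : EFG) {z : List ℕ} (hz : z ∈ G.Zset) : z ∈ G.H := (Finset.mem_filter.1 hz).1

/-- Decomposition of `u(γ ∧ I)` by the action chosen at `I`. -/
theorem uWedge_eq (G : EFG) (hPR : G.PerfectRecall) (i : Fin G.n) (j : ℕ) (hj : j < G.m i)
    (γ : G.Profile) :
    G.uWedge i j γ = ∑ a ∈ G.infoA i j, γ i j a * G.uWedgeAct i j a γ := by
  have hset : G.Zset.filter (fun h => ∃ b ∈ h, b ∈ G.infoA i j)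
      = (G.infoA i j).biUnion (fun a => G.Zset.filter (fun h => a ∈ h)) := by
    ext z; simp only [Finset.mem_filter, Finset.mem_biUnion]
    constructor
    · rintro ⟨h1, b, h2, h3⟩; exact ⟨b, h3, h1, h2⟩
    · rintro ⟨b, h3, h1, h2⟩; exact ⟨h1, b, h2, h3⟩
  rw [uWedge, hset, Finset.sum_biUnion]
  · refine Finset.sum_congr rfl fun a ha => ?_
    rw [uWedgeAct, Finset.mul_sum]
    refine Finset.sum_congr rfl fun z hz => ?_
    obtain ⟨hz, haz⟩ := Finset.mem_filter.1 hz
    have hzH := G.Z_sub hz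
    obtain ⟨l, e⟩ := G.mem_rec_split hPR i z hzH j a (G.F2 i z hzH j a hj ha haz)
    have hl := G.after_ne hPR i z hzH j a l e
    have hX : ∀ x ∈ G.XX i j, x.1 ≠ j := by
      rintro ⟨q, b⟩ hx rfl; exact G.XX_self hPR i _ hj b hx
    rw [omega, G.prodAlong_eq i γ γ (fun _ _ => rfl),
      G.prodAlongSkip_eq i j hj γ γ (fun _ _ => rfl) z [] (by simpa using hzH), e]
    have key : ∀ L : List (ℕ × ℕ), (∀ x ∈ L, x.1 ≠ j) →
        L.map (fun x => if x.1 = j then 1 else γ i x.1 x.2) = L.map (fun x => γ i x.1 x.2) := by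
      intro L hL
      exact List.map_congr_left fun x hx => if_neg (hL x hx)
    simp only [List.map_append, List.map_cons, List.prod_append, List.prod_cons, key _ hl,
      key _ hX, if_true]
    ring
  · intro a ha b hb hab
    refine Finset.disjoint_left.2 fun z h1 h2 => hab ?_
    obtain ⟨hz, haz⟩ := Finset.mem_filter.1 h1
    obtain ⟨_, hbz⟩ := Finset.mem_filter.1 h2
    have hzH := G.Z_sub hz
    obtain ⟨l, e⟩ := G.mem_rec_split hPR i z hzH j a (G.F2 i z hzH j a hj ha haz)
    obtain ⟨l', e'⟩ := G.mem_rec_split hPR i z hzH j b (G.F2 i z hzH j b hj hb hbz)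
    rw [e] at e'
    have := List.append_cancel_left e'
    simp only [List.cons.injEq, Prod.mk.injEq] at this
    exact this.1.2

/-- `rho`, with the component at the information set itself replaced too. -/
def rhoBar (G : EFG) (i : Fin G.n) (j : ℕ) (β βt : G.Profile) : G.Profile := fun p q =>
  if p = i ∧ q = j then βt i j else G.rho i j β βt p q

theorem rhoBar_ne (G : EFG) (i : Fin G.n) (j : ℕ) (β βt : G.Profile) (p : Fin G.n) (hp : p ≠ i) :
    G.rhoBar i j β βt p = β p := by
  funext q; simp [rhoBar, hp, rho]

theorem sum_aux (s : Finset ℕ) (b bt c v : ℕ → ℝ) (k : ℝ) (hk : 0 ≤ k)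
    (hv : ∀ a ∈ s, v a = k * c a) (hb : ∑ a ∈ s, b a = 1) (hbt : ∑ a ∈ s, bt a = 1)
    (h1 : ∀ a ∈ s, ∀ a' ∈ s, v a < v a' → b a = 0)
    (h2 : ∀ a ∈ s, ∀ a' ∈ s, c a < c a' → bt a = 0) :
    ∑ a ∈ s, b a * v a = ∑ a ∈ s, bt a * v a := by
  rcases hk.eq_or_lt with h0 | hpos
  · refine Finset.sum_congr rfl fun a ha => ?_
    rw [hv a ha, ← h0]; simp
  · have hne : s.Nonempty := by
      rcases s.eq_empty_or_nonempty with rfl | h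
      · simp at hb
      · exact h
    obtain ⟨m, hm, hmax⟩ := s.exists_max_image c hne
    have e1 : ∑ a ∈ s, b a * v a = ∑ a ∈ s, b a * v m := by
      refine Finset.sum_congr rfl fun a ha => ?_
      rcases (hmax a ha).lt_or_eq with h | h
      · rw [h1 a ha m hm (by rw [hv a ha, hv m hm]; exact mul_lt_mul_of_pos_left h hpos)]; simp
      · rw [hv a ha, hv m hm, h]
    have e2 : ∑ a ∈ s, bt a * v a = ∑ a ∈ s, bt a * v m := by
      refine Finset.sum_congr rfl fun a ha => ?_
      rcases (hmax a ha).lt_or_eq with h | h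
      · rw [h2 a ha m hm h]; simp
      · rw [hv a ha, hv m hm, h]
    rw [e1, e2, ← Finset.sum_mul, ← Finset.sum_mul, hb, hbt]

theorem uWedgeAct_cond (G : EFG) (hPR : G.PerfectRecall) (β βt : G.Profile) (μ : G.Belief)
    (hS : G.SelfIndep β μ) (i : Fin G.n) (j : ℕ) (hj : j < G.m i) (a : ℕ)
    (ha : a ∈ G.infoA i j) :
    G.uWedgeAct i j a (G.rho i j β βt) =
      (((G.XX i j).map (fun x => β i x.1 x.2)).prod * G.SInfo i j β) *
        G.uCond i j a (G.rho i j β βt) μ := by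
  rw [uWedgeAct, uCond, Finset.mul_sum]
  refine Finset.sum_congr rfl fun z hz => ?_
  obtain ⟨hz, haz⟩ := Finset.mem_filter.1 hz
  have hzH := G.Z_sub hz
  obtain ⟨l, e⟩ := G.mem_rec_split hPR i z hzH j a (G.F2 i z hzH j a hj ha haz)
  have hl := G.after_ne hPR i z hzH j a l e
  have hX : ∀ x ∈ G.XX i j, x.1 ≠ j := by
    rintro ⟨q, b⟩ hx rfl; exact G.XX_self hPR i _ hj b hx
  have hγ := G.rho_ne i j β βt
  have hn := G.nuAux_eq_s17 i j hj β _ hγ (μ i j) (G.SInfo i j β) (hS i j hj) z [] _ _ a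
    (by simpa using hzH) e hX
  rw [List.nil_append] at hn
  rw [G.prodAlongSkip_eq i j hj β _ hγ z [] (by simpa using hzH), e, nu]
  have k1 : l.map (fun x => if x.1 = j then 1 else G.rho i j β βt i x.1 x.2)
      = l.map (fun x => G.rho i j β βt i x.1 x.2) :=
    List.map_congr_left fun x hx => if_neg (hl x hx)
  have k2 : (G.XX i j).map (fun x => if x.1 = j then 1 else G.rho i j β βt i x.1 x.2)
      = (G.XX i j).map (fun x => β i x.1 x.2) := by
    refine List.map_congr_left fun x hx => ?_
    obtain ⟨q, b⟩ := x
    obtain ⟨s, t, e'⟩ := List.append_of_mem hx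
    have hq : q < G.m i := (G.F1 hPR i z hzH s (t ++ (j, a) :: l) q b (by rw [e, e']; simp)).1
    rw [if_neg (hX _ hx)]
    simp only
    rw [G.rho_i hPR i j q hj hq, if_neg]
    rintro ⟨c, hc⟩
    exact G.XX_anti hPR i j q hj b c hx hc
  simp only [List.map_append, List.map_cons, List.prod_append, List.prod_cons, k1, k2, if_true]
  rw [Sh] at hn
  linear_combination (-(((G.XX i j).map (fun x => β i x.1 x.2)).prod * G.u i z)) * hn

theorem uWedge_rhoBar (G : EFG) (hPR : G.PerfectRecall) (β βt : G.Profile) (μ : G.Belief)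
    (hβ : G.IsBehProfile β) (hβt : G.IsBehProfile βt) (hchar : G.NashChar β βt μ)
    (i : Fin G.n) (j : ℕ) (hj : j < G.m i) :
    G.uWedge i j (G.rho i j β βt) = G.uWedge i j (G.rhoBar i j β βt) := by
  obtain ⟨c1, c2, _, c4⟩ := hchar
  rw [G.uWedge_eq hPR i j hj, G.uWedge_eq hPR i j hj]
  have e1 : G.rho i j β βt i j = β i j := by
    rw [G.rho_i hPR i j j hj hj, if_neg]
    rintro ⟨a, ha⟩
    exact G.XX_self hPR i j hj a ha
  have e2 : G.rhoBar i j β βt i j = βt i j := by simp [rhoBar]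
  have e3 : ∀ a, G.uWedgeAct i j a (G.rhoBar i j β βt) = G.uWedgeAct i j a (G.rho i j β βt) := by
    intro a
    refine Finset.sum_congr rfl fun z hz => ?_
    have hzH := G.Z_sub (Finset.mem_filter.1 hz).1
    rw [G.prodAlongSkip_eq i j hj β _ (G.rho_ne i j β βt) z [] (by simpa using hzH),
      G.prodAlongSkip_eq i j hj β _ (G.rhoBar_ne i j β βt) z [] (by simpa using hzH)]
    congr 3
    refine List.map_congr_left fun x _ => ?_
    by_cases hx : x.1 = j
    · simp [hx]
    · simp [hx, rhoBar]
  simp only [e1, e2, e3]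
  refine sum_aux _ _ _ (fun a => G.uCond i j a (G.rho i j β βt) μ) _
    (((G.XX i j).map (fun x => β i x.1 x.2)).prod * G.SInfo i j β) ?_
    (fun a ha => G.uWedgeAct_cond hPR β βt μ c4 i j hj a ha) (hβ i j hj).2 (hβt i j hj).2
    (c1 i j hj) (c2 i j hj)
  refine mul_nonneg (List.prod_nonneg ?_) (Finset.sum_nonneg fun h hh => ?_)
  · intro y hy
    obtain ⟨⟨q, b⟩, hx, rfl⟩ := List.mem_map.1 hy
    obtain ⟨z, hz, _, e⟩ := G.XX_rec hPR i j hj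
    obtain ⟨s, t, e'⟩ := List.append_of_mem hx
    have := G.F1 hPR i z hz _ _ _ _ (e.trans e')
    exact (hβ i q this.1).1 b this.2.1
  · exact G.not_nonneg i β hβ h [] (by simpa using ((G.info_spec i j h hj).1 hh).1)

theorem omega_congr (G : EFG) (i : Fin G.n) (β γ γ' : G.Profile)
    (hγ : ∀ p, p ≠ i → γ p = β p) (hγ' : ∀ p, p ≠ i → γ' p = β p) (z : List ℕ)
    (h : ∀ x ∈ G.recordFrom i [] z, γ i x.1 = γ' i x.1) : G.omega γ z = G.omega γ' z := by
  rw [omega, omega, G.prodAlong_eq i β γ hγ, G.prodAlong_eq i β γ' hγ']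
  congr 2
  exact List.map_congr_left fun x hx => by rw [h x hx]

theorem main (G : EFG) (hPR : G.PerfectRecall)
    (β βt : G.Profile) (μ : G.Belief)
    (hβ : G.IsBehProfile β) (hβt : G.IsBehProfile βt)
    (hchar : G.NashChar β βt μ) (i : Fin G.n) (k : ℕ) :
    ∀ j : ℕ, j < G.m i →
      (G.H.sup fun h => (G.recordFrom i [] h).length) < (G.XX i j).length + k →
      G.uWedge i j β = G.uWedge i j (G.rho i j β βt) := by
  induction k with
  | zero =>
    intro j hj hlt
    obtain ⟨z, hz, _, e⟩ := G.XX_rec hPR i j hj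
    have := Finset.le_sup (f := fun h => (G.recordFrom i [] h).length) hz
    simp only [e] at this
    omega
  | succ k ih =>
    intro j hj hlt
    let nx : List ℕ → Option ℕ := fun z =>
      ((G.recordFrom i [] z)[(G.XX i j).length + 1]?).map Prod.fst
    rw [uWedge, uWedge]
    rw [← Finset.sum_fiberwise_of_maps_to (t := (G.Zset.filter
        (fun h => ∃ b ∈ h, b ∈ G.infoA i j)).image nx) (g := nx)
        (fun z hz => Finset.mem_image_of_mem _ hz),
      ← Finset.sum_fiberwise_of_maps_to (t := (G.Zset.filter
        (fun h => ∃ b ∈ h, b ∈ G.infoA i j)).image nx) (g := nx)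
        (fun z hz => Finset.mem_image_of_mem _ hz)]
    refine Finset.sum_congr rfl fun o ho => ?_
    cases o with
    | none =>
      refine Finset.sum_congr rfl fun z hz => ?_
      simp only [Finset.mem_filter] at hz
      obtain ⟨⟨hz, hthru⟩, hnx⟩ := hz
      have hzH := G.Z_sub hz
      obtain ⟨a, l, e⟩ := (G.thru_iff hPR i z hzH j hj).1 hthru
      have hl : l = [] := by
        cases l with
        | nil => rfl
        | cons x l => simp [nx, e, List.getElem?_append_right] at hnx
      subst hl
      congr 1
      refine G.omega_congr i β _ _ (fun _ _ => rfl) (G.rho_ne i j β βt) z ?_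
      rintro ⟨q, b⟩ hx
      obtain ⟨s, t, e'⟩ := List.append_of_mem hx
      have hq := (G.F1 hPR i z hzH _ _ _ _ e').1
      simp only
      rw [G.rho_i hPR i j q hj hq, if_neg]
      rintro ⟨c, hc⟩
      rw [e, List.mem_append, List.mem_singleton] at hx
      rcases hx with hx | hx
      · exact G.XX_anti hPR i j q hj b c hx hc
      · simp only [Prod.mk.injEq] at hx
        rw [hx.1] at hc
        exact G.XX_self hPR i j hj c hc
    | some q =>
      obtain ⟨z0, hz0, hnx0⟩ := Finset.mem_image.1 ho
      obtain ⟨hz0, hthru0⟩ := Finset.mem_filter.1 hz0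
      -- structure of records through `j` with next set `q`
      have struct : ∀ z ∈ G.Zset, (∃ b ∈ z, b ∈ G.infoA i j) → nx z = some q →
          ∃ a b l, G.recordFrom i [] z = G.XX i j ++ (j, a) :: (q, b) :: l := by
        intro z hz hthru hnx
        obtain ⟨a, l, e⟩ := (G.thru_iff hPR i z (G.Z_sub hz) j hj).1 hthru
        cases l with
        | nil => simp [nx, e] at hnx
        | cons x l =>
          obtain ⟨s, b⟩ := x
          simp [nx, e, List.getElem?_append_right] at hnx
          subst hnx
          exact ⟨a, b, l, e⟩
      obtain ⟨a0, b0, l0, e0⟩ := struct z0 hz0 hthru0 hnx0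
      have f0 := G.F1 hPR i z0 (G.Z_sub hz0) (G.XX i j ++ [(j, a0)]) l0 q b0 (by rw [e0]; simp)
      have hq := f0.1
      have hXq : G.XX i q = G.XX i j ++ [(j, a0)] := f0.2.2.2.symm
      have hset : (G.Zset.filter (fun h => ∃ b ∈ h, b ∈ G.infoA i j)).filter
          (fun z => nx z = some q) = G.Zset.filter (fun h => ∃ b ∈ h, b ∈ G.infoA i q) := by
        ext z
        simp only [Finset.mem_filter]
        constructor
        · rintro ⟨⟨hz, hthru⟩, hnx⟩
          refine ⟨hz, ?_⟩
          obtain ⟨a, b, l, e⟩ := struct z hz hthru hnx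
          have := G.F1 hPR i z (G.Z_sub hz) (G.XX i j ++ [(j, a)]) l q b (by rw [e]; simp)
          exact ⟨b, this.2.2.1, this.2.1⟩
        · rintro ⟨hz, hthru⟩
          obtain ⟨b, l, e⟩ := (G.thru_iff hPR i z (G.Z_sub hz) q hq).1 hthru
          rw [hXq] at e
          refine ⟨⟨hz, (G.thru_iff hPR i z (G.Z_sub hz) j hj).2 ⟨a0, (q, b) :: l, by simp [e]⟩⟩, ?_⟩
          simp [nx, e, List.getElem?_append_right]
      rw [hset]
      have hI : G.uWedge i q β = G.uWedge i q (G.rho i q β βt) := by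
        apply ih q hq
        rw [hXq, List.length_append, List.length_singleton]; omega
      rw [G.uWedge_rhoBar hPR β βt μ hβ hβt hchar i q hq] at hI
      refine hI.trans ?_
      rw [uWedge]
      refine Finset.sum_congr rfl fun z hz => ?_
      obtain ⟨hz, hthru⟩ := Finset.mem_filter.1 hz
      have hzH := G.Z_sub hz
      obtain ⟨b, l, e⟩ := (G.thru_iff hPR i z hzH q hq).1 hthru
      congr 1
      refine G.omega_congr i β _ _ (G.rhoBar_ne i q β βt) (G.rho_ne i j β βt) z ?_
      rintro ⟨s, c⟩ hx
      have hs : s < G.m i := by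
        obtain ⟨s1, t, e'⟩ := List.append_of_mem hx
        exact (G.F1 hPR i z hzH _ _ _ _ e').1
      simp only [rhoBar, true_and]
      rw [G.rho_i hPR i j s hj hs, G.rho_i hPR i q s hq hs]
      rw [e, List.mem_append, List.mem_cons] at hx
      have hjq : (j, a0) ∈ G.XX i q := by rw [hXq]; simp
      rcases hx with hx | hx | hx
      · have n1 : s ≠ q := by rintro rfl; exact G.XX_self hPR i _ hq c hx
        have n2 : ¬ ∃ a, (q, a) ∈ G.XX i s := by
          rintro ⟨d, hd⟩; exact G.XX_anti hPR i q s hq c d hx hd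
        have n3 : ¬ ∃ a, (j, a) ∈ G.XX i s := by
          rintro ⟨d, hd⟩
          rw [hXq, List.mem_append, List.mem_singleton] at hx
          rcases hx with hx | hx
          · exact G.XX_anti hPR i j s hj c d hx hd
          · simp only [Prod.mk.injEq] at hx
            rw [hx.1] at hd
            exact G.XX_self hPR i j hj d hd
        rw [if_neg n1, if_neg n2, if_neg n3]
      · simp only [Prod.mk.injEq] at hx
        obtain ⟨rfl, rfl⟩ := hx
        rw [if_pos rfl, if_pos ⟨a0, hjq⟩]
      · obtain ⟨l1, l2, rfl⟩ := List.append_of_mem hx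
        have hXs := (G.F1 hPR i z hzH (G.XX i q ++ (q, b) :: l1) l2 s c (by rw [e]; simp)).2.2.2
        have m1 : ∃ a, (q, a) ∈ G.XX i s := ⟨b, by rw [← hXs]; simp⟩
        have m2 : ∃ a, (j, a) ∈ G.XX i s := ⟨a0, by rw [← hXs]; simp [hjq]⟩
        rw [if_pos m1, if_pos m2]
        split_ifs with h
        · rw [h]
        · rfl

end EFG

/-- Equation (edneA): under the Nash characterization,
`u^i(β* ∧ I_i^j) = u^i(ϱ^i_{I_i^j}(β*, β̃*) ∧ I_i^j)` for every information set. -/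
theorem stmt17 (G : EFG) (hPR : G.PerfectRecall)
    (β βt : G.Profile) (μ : G.Belief)
    (hβ : G.IsBehProfile β) (hβt : G.IsBehProfile βt)
    (hchar : G.NashChar β βt μ) :
    ∀ (i : Fin G.n) (j : ℕ), j < G.m i →
      G.uWedge i j β = G.uWedge i j (G.rho i j β βt) := by
  intro i j hj
  exact G.main hPR β βt μ hβ hβt hchar i _ j hj
    (Nat.lt_of_lt_of_le (Nat.lt_succ_self _) (Nat.le_add_left _ _))
end
end
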